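/- For every a ∈ ℝ and every positive integer n that is not divisible by 8, there exists b ∈ ℝ\{0} such that the ℂ-vector space 𝒮(a,b) has dimension exactly n. -/

import Mathlib

/-!
Write `n = 2^s (2e + 1)` with `s ≤ 2` and take `b = 4πc` with `c = 2^s P^e / 2`, where `P` is `5` or
`13`. The space `𝒮(a,b)` is computed by Fourier analysis.

The fields `T = ∂/∂t`, `X = ∂/∂x`, `Y = ∂/∂y + x ∂/∂z`, `Z = ∂/∂z` act on functions on the manifold
as skew-adjoint operators for the `L²` inner product, `T` and `Z` are central and `[X, Y] = Z`
(`KT.heisenbergOps`). Pairing the two equations with `T g` and `T f` gives `T f = T g = 0`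
(`T_eq_zero`). In the Fourier mode `Z = iν` with `ν ≠ 0`, the system says that `f ± g` are
eigenvectors of a harmonic oscillator, so by the ladder-operator argument (`ladder`) they vanish
unless `b²/16 - ν²/b²` is a natural multiple of `2|ν|` (`mode_eq_zero`). As `π` is irrational, this
resonance cannot occur both for `P = 5` and for `P = 13` (`nonResonant_or`), and `P` is chosen
non-resonant.

Then `f` and `g` are functions of `(x, y)` alone, and their Fourier coefficients `α`, `β` at `(k, m)`
satisfy `kα = -imβ` and `(c - k)β = imα`. This has a one-dimensional space of solutions if
`k² + m² = ck` and none but zero otherwise (`KT.vec_isSol`, `KT.mem_span_of_isSol`). So the dimension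
is the number of lattice points on that circle, which unique factorization in the Gaussian integers
shows to be `2^s (2e + 1) = n` (`card_lat`).
-/

open Complex MeasureTheory

noncomputable section

/-- Functions of four real variables `(t, x, y, z)` with complex values. -/
abbrev F4 : Type := ℝ → ℝ → ℝ → ℝ → ℂ

/-- Smoothness of a function of four real variables. -/
def Smooth4 (f : F4) : Prop :=
  ContDiff ℝ (⊤ : ℕ∞) (fun p : ℝ × ℝ × ℝ × ℝ => f p.1 p.2.1 p.2.2.1 p.2.2.2)

/-- The invariance properties identifying smooth functions on `ℝ⁴` with smooth
functions on the Kodaira–Thurston manifold `KT⁴`. -/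
def KTPeriodic (f : F4) : Prop :=
  ∀ t x y z : ℝ,
    f (t + 1) x y z = f t x y z ∧
    f t (x + 1) y (z + y) = f t x y z ∧
    f t x (y + 1) z = f t x y z ∧
    f t x y (z + 1) = f t x y z

/-- Partial derivative in `t`. -/
def pT (f : F4) (t x y z : ℝ) : ℂ := deriv (fun s => f s x y z) t
/-- Partial derivative in `x`. -/
def pX (f : F4) (t x y z : ℝ) : ℂ := deriv (fun s => f t s y z) x
/-- Partial derivative in `y`. -/
def pY (f : F4) (t x y z : ℝ) : ℂ := deriv (fun s => f t x s z) y
/-- Partial derivative in `z`. -/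
def pZ (f : F4) (t x y z : ℝ) : ℂ := deriv (fun s => f t x y s) z

/-- The vector field `V₁ = (1/2)(∂/∂t − i ∂/∂x)`. -/
def V₁ (f : F4) (t x y z : ℝ) : ℂ :=
  (1 / 2) * (pT f t x y z - Complex.I * pX f t x y z)

/-- The conjugate vector field `V̄₁ = (1/2)(∂/∂t + i ∂/∂x)`. -/
def V₁c (f : F4) (t x y z : ℝ) : ℂ :=
  (1 / 2) * (pT f t x y z + Complex.I * pX f t x y z)

/-- The vector field `V₂ = (1/2)(∂/∂y + x ∂/∂z − ((a−i)/b) ∂/∂z)`. -/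
def V₂ (a b : ℝ) (f : F4) (t x y z : ℝ) : ℂ :=
  (1 / 2) * (pY f t x y z + (x : ℂ) * pZ f t x y z -
    (((a : ℂ) - Complex.I) / (b : ℂ)) * pZ f t x y z)

/-- The conjugate vector field `V̄₂ = (1/2)(∂/∂y + x ∂/∂z − ((a+i)/b) ∂/∂z)`. -/
def V₂c (a b : ℝ) (f : F4) (t x y z : ℝ) : ℂ :=
  (1 / 2) * (pY f t x y z + (x : ℂ) * pZ f t x y z -
    (((a : ℂ) + Complex.I) / (b : ℂ)) * pZ f t x y z)

/-- The space `𝒮(a,b)` of pairs `(f,g)` of smooth KT-periodic functions satisfying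
`−V̄₂(f) + V̄₁(g) + (b/4)g = 0` and `V₁(f) + V₂(g) = 0`. -/
def Sol (a b : ℝ) : Set (F4 × F4) :=
  {fg | Smooth4 fg.1 ∧ Smooth4 fg.2 ∧ KTPeriodic fg.1 ∧ KTPeriodic fg.2 ∧
    (∀ t x y z : ℝ,
      -V₂c a b fg.1 t x y z + V₁c fg.2 t x y z + ((b : ℂ) / 4) * fg.2 t x y z = 0) ∧
    (∀ t x y z : ℝ, V₁ fg.1 t x y z + V₂ a b fg.2 t x y z = 0)}

/-- `S` is a `ℂ`-subspace of dimension exactly `n`: there are `n` linearly independent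
elements whose span is exactly `S`. -/
def HasDimOver {V : Type*} [AddCommGroup V] [Module ℂ V] (S : Set V) (n : ℕ) : Prop :=
  ∃ v : Fin n → V, LinearIndependent ℂ v ∧
    (Submodule.span ℂ (Set.range v) : Set V) = S

end

/-! ### Skew-adjoint operators with Heisenberg commutation relations -/

section Abstract
variable {V : Type*} [NormedAddCommGroup V] [InnerProductSpace ℂ V]

/-- The ladder-operator argument: if `B` is the adjoint of `A` and `[A, B] = 2ω` on an
`A`-invariant subspace `E`, then the eigenvalues of `B A` on `E` below `2ωk` are of the form `2ωj`.
Indeed `A` lowers the eigenvalue by `2ω`, while an eigenvalue of `B A` is never negative, so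
applying `A` repeatedly must reach `0`. -/
theorem ladder {A B : V →ₗ[ℂ] V} (hadj : ∀ u v, inner ℂ (A u) v = inner ℂ u (B v))
    (E : Submodule ℂ V) (hAE : ∀ u ∈ E, A u ∈ E) {ω : ℝ}
    (hcomm : ∀ u ∈ E, A (B u) - B (A u) = ((2 * ω : ℝ) : ℂ) • u) (k : ℕ) :
    ∀ μ : ℝ, μ < 2 * ω * k → ∀ p ∈ E, p ≠ 0 → B (A p) = (μ : ℂ) • p →
      ∃ j : ℕ, μ = 2 * ω * j := by
  induction k with
  | zero =>
    intro μ hμ p _ hp h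
    exfalso
    have h1 : inner ℂ (A p) (A p) = (μ : ℂ) * inner ℂ p p := by rw [hadj, h, inner_smul_right]
    rw [inner_self_eq_norm_sq_to_K, inner_self_eq_norm_sq_to_K] at h1
    simp only [coe_algebraMap] at h1
    have h2 : ‖A p‖ ^ 2 = μ * ‖p‖ ^ 2 := by exact_mod_cast h1
    have h3 : 0 < ‖p‖ ^ 2 := by positivity
    have h4 : μ < 0 := by simpa using hμ
    nlinarith [sq_nonneg ‖A p‖]
  | succ k ih =>
    intro μ hμ p hpE hp h
    by_cases hA : A p = 0
    · rw [hA, map_zero] at h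
      have : (μ : ℂ) = 0 := by
        rcases smul_eq_zero.mp h.symm with h | h
        · exact h
        · exact absurd h hp
      exact ⟨0, by simpa using this⟩
    · have h1 : B (A (A p)) = ((μ - 2 * ω : ℝ) : ℂ) • A p := by
        have h2 := hcomm (A p) (hAE p hpE)
        rw [h, map_smul] at h2
        rw [← sub_eq_zero] at h2 ⊢
        rw [← neg_eq_zero, ← h2]
        push_cast
        module
      obtain ⟨j, hj⟩ := ih (μ - 2 * ω) (by push_cast at hμ; linarith) (A p) (hAE p hpE) hA h1
      exact ⟨j + 1, by push_cast; linarith⟩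

/-- Skew-adjoint operators satisfying the commutation relations of the Lie algebra of
`ℝ × H₃(ℝ)`: `T` and `Z` are central and `[X, Y] = Z`. -/
structure HeisenbergOps (T X Y Z : V →ₗ[ℂ] V) : Prop where
  skewT : ∀ u v, inner ℂ (T u) v = -inner ℂ u (T v)
  skewX : ∀ u v, inner ℂ (X u) v = -inner ℂ u (X v)
  skewY : ∀ u v, inner ℂ (Y u) v = -inner ℂ u (Y v)
  skewZ : ∀ u v, inner ℂ (Z u) v = -inner ℂ u (Z v)
  TX : ∀ u, T (X u) = X (T u)
  TY : ∀ u, T (Y u) = Y (T u)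
  TZ : ∀ u, T (Z u) = Z (T u)
  ZX : ∀ u, Z (X u) = X (Z u)
  ZY : ∀ u, Z (Y u) = Y (Z u)
  XY : ∀ u, X (Y u) - Y (X u) = Z u

/-- The system defining `𝒮(a,b)`, multiplied by `2` and written in terms of abstract operators
standing for `T = ∂/∂t`, `X = ∂/∂x`, `Y = ∂/∂y + x ∂/∂z` and `Z = ∂/∂z`. -/
def Eqs (T X Y Z : V →ₗ[ℂ] V) (a b : ℝ) (f g : V) : Prop :=
  T g + I • X g + (b / 2 : ℂ) • g = Y f - ((a + I) / b : ℂ) • Z f ∧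
  T f - I • X f = -Y g + ((a - I) / b : ℂ) • Z g

/-- Solutions do not depend on `t`: pair the first equation with `T g`, the second with `T f`, and
add the real parts. By skew-adjointness everything cancels except `‖T f‖² + ‖T g‖²`. -/
theorem T_eq_zero {T X Y Z : V →ₗ[ℂ] V} (H : HeisenbergOps T X Y Z) {a b : ℝ} {f g : V}
    (h : Eqs T X Y Z a b f g) : T f = 0 ∧ T g = 0 := by
  obtain ⟨h1, h2⟩ := h
  have e1 := congrArg (fun w => inner ℂ (T g) w) h1
  have e2 := congrArg (fun w => inner ℂ (T f) w) h2
  simp only [inner_add_right, inner_sub_right, inner_smul_right, inner_neg_right] at e1 e2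
  have s : ∀ (u v : V), inner ℂ v u = starRingEnd ℂ (inner ℂ u v) := fun u v => (inner_conj_symm v u).symm
  have kX : ∀ u, (inner ℂ (T u) (X u)).im = 0 := by
    intro u
    have : inner ℂ (T u) (X u) = inner ℂ (X u) (T u) := by
      have := H.skewX (T u) u
      have h3 := H.skewT (X u) u
      rw [H.TX] at h3
      rw [h3] at this
      exact (neg_injective this).symm
    rw [s (T u) (X u)] at this
    have := congrArg Complex.im this
    simp only [conj_im] at this
    linarith
  have kT : ∀ u, (inner ℂ (T u) u).re = 0 := by
    intro u
    have := H.skewT u u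
    rw [s (T u) u] at this
    have := congrArg Complex.re this
    simp only [neg_re, conj_re] at this
    linarith
  have kY : inner ℂ (T f) (Y g) = starRingEnd ℂ (inner ℂ (T g) (Y f)) := by
    rw [← s]
    have h3 := H.skewY (T f) g
    rw [← H.TY, H.skewT] at h3
    exact (neg_injective h3).symm
  have kZ : inner ℂ (T f) (Z g) = starRingEnd ℂ (inner ℂ (T g) (Z f)) := by
    rw [← s]
    have h3 := H.skewZ (T f) g
    rw [← H.TZ, H.skewT] at h3
    exact (neg_injective h3).symm
  rw [kY, kZ] at e2
  rw [inner_self_eq_norm_sq_to_K] at e1 e2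
  have r : ((a - I) / b : ℂ) = starRingEnd ℂ ((a + I) / b : ℂ) := by
    simp [sub_eq_add_neg]
  rw [r, ← map_mul] at e2
  have f1 := congrArg Complex.re e1
  have f2 := congrArg Complex.re e2
  have hb : (b / 2 : ℂ) = ((b / 2 : ℝ) : ℂ) := by push_cast; rfl
  rw [hb] at f1
  have n1 : ((‖T f‖ : ℂ) ^ 2).re = ‖T f‖ ^ 2 := by rw [← ofReal_pow, ofReal_re]
  have n2 : ((‖T g‖ : ℂ) ^ 2).re = ‖T g‖ ^ 2 := by rw [← ofReal_pow, ofReal_re]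
  simp only [add_re, sub_re, neg_re, conj_re, I_mul_re, re_ofReal_mul, kX, kT, coe_algebraMap,
    n1, n2] at f1 f2
  have hf : ‖T f‖ ^ 2 = 0 := by nlinarith [sq_nonneg ‖T f‖, sq_nonneg ‖T g‖]
  have hg : ‖T g‖ ^ 2 = 0 := by nlinarith [sq_nonneg ‖T f‖, sq_nonneg ‖T g‖]
  exact ⟨by simpa using hf, by simpa using hg⟩

/-- A solution in the eigenspace `Z = iν`, `ν ≠ 0`, vanishes off resonance. With
`L = iX + b/4 + Y - (a/b)Z` and its adjoint `L†`, the system reads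
`L (f - g) = (b/4 - ν/b) (f + g)` and `L† (f + g) = (b/4 + ν/b) (f - g)`, and `[L, L†] = 2ν` on the
eigenspace. So `f - g` and `f + g` are eigenvectors of `L† L` and `L L†` with eigenvalue
`b²/16 - ν²/b²`, which `ladder` excludes. -/
theorem mode_eq_zero {T X Y Z : V →ₗ[ℂ] V} (H : HeisenbergOps T X Y Z) {a b ν : ℝ} (hb : b ≠ 0)
    (hν : ν ≠ 0) {f g : V} (hf : Z f = (I * ν) • f) (hg : Z g = (I * ν) • g)
    (h : Eqs T X Y Z a b f g)
    (hμ : ∀ j : ℕ, b ^ 2 / 16 - ν ^ 2 / b ^ 2 ≠ 2 * |ν| * j) : f = 0 ∧ g = 0 := by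
  obtain ⟨hTf, hTg⟩ := T_eq_zero H h
  obtain ⟨h1, h2⟩ := h
  rw [hTg, hf] at h1
  rw [hTf, hg] at h2
  set L : V →ₗ[ℂ] V := I • X + (b / 4 : ℂ) • LinearMap.id + Y - (a / b : ℂ) • Z with hL
  set L' : V →ₗ[ℂ] V := I • X + (b / 4 : ℂ) • LinearMap.id - Y + (a / b : ℂ) • Z with hL'
  have Lap : ∀ u, L u = I • X u + (b / 4 : ℂ) • u + Y u - (a / b : ℂ) • Z u := fun u => rfl
  have Lap' : ∀ u, L' u = I • X u + (b / 4 : ℂ) • u - Y u + (a / b : ℂ) • Z u := fun u => rfl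
  have hbC : (b : ℂ) ≠ 0 := by exact_mod_cast hb
  have cI : (a + I) / b * (I * ν) = a / b * (I * ν) - (ν / b : ℂ) := by
    field_simp
    linear_combination (ν : ℂ) * I_mul_I
  have cI' : (a - I) / b * (I * ν) = a / b * (I * ν) + (ν / b : ℂ) := by
    field_simp
    linear_combination -(ν : ℂ) * I_mul_I
  rw [smul_smul, cI] at h1
  rw [smul_smul, cI'] at h2
  have hq : L (f - g) = (-(ν / b - b / 4) : ℂ) • (f + g) := by
    rw [Lap, map_sub, map_sub, map_sub, hf, hg]
    linear_combination (norm := module) (-1 : ℂ) • h1 - h2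
  have hp : L' (f + g) = ((ν / b + b / 4) : ℂ) • (f - g) := by
    rw [Lap', map_add, map_add, map_add, hf, hg]
    linear_combination (norm := module) h1 - h2
  have adj : ∀ u v, inner ℂ (L u) v = inner ℂ u (L' v) := by
    intro u v
    rw [Lap, Lap']
    simp only [inner_add_left, inner_sub_left, inner_smul_left, inner_add_right, inner_sub_right,
      inner_smul_right, H.skewX, H.skewY, H.skewZ]
    have c4 : starRingEnd ℂ (b / 4 : ℂ) = b / 4 := by
      rw [show (b / 4 : ℂ) = ((b / 4 : ℝ) : ℂ) by push_cast; rfl, conj_ofReal]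
    have cab : starRingEnd ℂ (a / b : ℂ) = a / b := by
      rw [← ofReal_div, conj_ofReal]
    rw [c4, cab, conj_I]
    ring
  have adj' : ∀ u v, inner ℂ (L' u) v = inner ℂ u (L v) := by
    intro u v
    rw [← inner_conj_symm, ← adj, inner_conj_symm]
  let E : Submodule ℂ V := LinearMap.ker (Z - (I * ν) • LinearMap.id)
  have memE : ∀ u, u ∈ E ↔ Z u = (I * ν) • u := by
    intro u
    rw [LinearMap.mem_ker, LinearMap.sub_apply, sub_eq_zero]
    rfl
  have LE : ∀ u ∈ E, L u ∈ E := by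
    intro u hu
    rw [memE] at hu ⊢
    rw [Lap]
    simp only [map_add, map_sub, map_smul, H.ZX, H.ZY, hu]
    module
  have LE' : ∀ u ∈ E, L' u ∈ E := by
    intro u hu
    rw [memE] at hu ⊢
    rw [Lap']
    simp only [map_add, map_sub, map_smul, H.ZX, H.ZY, hu]
    module
  have comm : ∀ u ∈ E, L (L' u) - L' (L u) = ((2 * ν : ℝ) : ℂ) • u := by
    intro u hu
    rw [memE] at hu
    have e := H.XY u
    rw [hu] at e
    rw [Lap, Lap', Lap, Lap']
    simp only [map_add, map_sub, map_smul, H.ZX, H.ZY, hu]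
    have e' : X (Y u) = Y (X u) + (I * ν) • u := by rw [← e]; abel
    rw [e']
    have : ((2 * ν : ℝ) : ℂ) = -2 * I * (I * ν) := by
      push_cast
      linear_combination 2 * (ν : ℂ) * I_mul_I
    rw [this]
    module
  have hfE : f ∈ E := (memE f).2 hf
  have hgE : g ∈ E := (memE g).2 hg
  set μ : ℝ := b ^ 2 / 16 - ν ^ 2 / b ^ 2 with hμd
  have mu1 : (-(ν / b - b / 4) : ℂ) * (ν / b + b / 4) = (μ : ℂ) := by
    rw [hμd]; push_cast; field_simp; ring
  have hqq : L' (L (f - g)) = (μ : ℂ) • (f - g) := by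
    rw [hq, map_smul, hp, smul_smul, mu1]
  have hpp : L (L' (f + g)) = (μ : ℂ) • (f + g) := by
    rw [hp, map_smul, hq, smul_smul, mul_comm, mu1]
  have mune : (μ : ℂ) ≠ 0 := by
    have := hμ 0
    simp only [Nat.cast_zero, mul_zero] at this
    exact_mod_cast this
  -- `ladder` needs a positive commutator, so the sign of `ν` decides whether it is applied to
  -- `L† L` or to `L L†`; the other combination then vanishes because the eigenvalue is nonzero.
  have fin : f - g = 0 ∧ f + g = 0 := by
    have ex : ∀ ω : ℝ, 0 < ω → ∃ k : ℕ, μ < 2 * ω * k := by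
      intro ω hω
      obtain ⟨k, hk⟩ := exists_nat_gt (μ / (2 * ω))
      exact ⟨k, by rw [div_lt_iff₀ (by positivity)] at hk; linarith⟩
    rcases lt_or_gt_of_ne hν with hneg | hpos
    · have hp0 : f + g = 0 := by
        by_contra hne
        obtain ⟨k, hk⟩ := ex (-ν) (by linarith)
        obtain ⟨j, hj⟩ := ladder (A := L') (B := L) adj' E LE' (ω := -ν)
          (by
            intro u hu
            have := comm u hu
            rw [← neg_sub, this]
            push_cast
            module) k μ hk (f + g) (E.add_mem hfE hgE) hne hpp
        exact hμ j (by rw [abs_of_neg hneg]; exact hj)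
      refine ⟨?_, hp0⟩
      rw [hp0, smul_zero] at hq
      rw [hq, map_zero] at hqq
      exact (smul_eq_zero.mp hqq.symm).resolve_left mune
    · have hq0 : f - g = 0 := by
        by_contra hne
        obtain ⟨k, hk⟩ := ex ν hpos
        obtain ⟨j, hj⟩ := ladder (A := L) (B := L') adj E LE (ω := ν) comm k μ hk (f - g)
          (E.sub_mem hfE hgE) hne hqq
        exact hμ j (by rw [abs_of_pos hpos]; exact hj)
      refine ⟨hq0, ?_⟩
      rw [hq0, smul_zero] at hp
      rw [hp, map_zero] at hpp
      exact (smul_eq_zero.mp hpp.symm).resolve_left mune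
  have hfg := sub_eq_zero.mp fin.1
  have h0 := fin.2
  rw [hfg, ← two_smul ℂ] at h0
  have : g = 0 := (smul_eq_zero.mp h0).resolve_left two_ne_zero
  exact ⟨by rw [hfg, this], this⟩

end Abstract

/-! ### Avoiding resonances -/

/-- For `b = 4πc` no nonzero Fourier mode in `z` can carry a solution: this is the condition
`b²/16 - ν²/b² ≠ 2|ν|k` of `mode_eq_zero` for `|ν| = 2πn`, multiplied by `4c²`. -/
def NonResonant (c : ℝ) : Prop :=
  ∀ n : ℕ, 0 < n → ∀ k : ℕ, 4 * Real.pi ^ 2 * c ^ 4 ≠ 16 * Real.pi * n * k * c ^ 2 + (n : ℝ) ^ 2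

/-- `1` and `π` are linearly independent over `ℚ`. -/
theorem irr_lin {p q : ℚ} (h : (p : ℝ) * Real.pi = q) : p = 0 ∧ q = 0 := by
  by_cases hp : p = 0
  · subst hp
    refine ⟨rfl, ?_⟩
    have : (q : ℝ) = 0 := by rw [← h]; simp
    exact_mod_cast this
  · exfalso
    apply irrational_pi
    refine ⟨q / p, ?_⟩
    have : (p : ℝ) ≠ 0 := by exact_mod_cast hp
    push_cast
    rw [← h]
    field_simp

/-- For `k = 0` this is the irrationality of `π`. For `k > 0` the right-hand side is too large
when `km ≥ 4` and too small when `km ≤ 3`, as `3.14 < π < 3.15` shows. -/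
theorem no_quad {m k : ℕ} (hm : 0 < m) :
    (8 * Real.pi) ^ 2 ≠ 8 * k * m * (8 * Real.pi) + (m : ℝ) ^ 2 := by
  intro h
  have p1 := Real.pi_gt_d2
  have p2 := Real.pi_lt_d2
  have hmR : (1 : ℝ) ≤ m := by exact_mod_cast hm
  rcases Nat.eq_zero_or_pos k with rfl | hk
  · have h1 : (8 * Real.pi) ^ 2 = (m : ℝ) ^ 2 := by simpa using h
    have h2 : 8 * Real.pi = m := by
      rwa [sq_eq_sq₀ (by positivity) (by positivity)] at h1
    have := (irr_lin (p := 8) (q := m) (by push_cast; exact h2)).1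
    norm_num at this
  · have hkR : (1 : ℝ) ≤ k := by exact_mod_cast hk
    by_cases h4 : 4 ≤ k * m
    · have : (4 : ℝ) ≤ k * m := by exact_mod_cast h4
      nlinarith
    · have h3 : (k : ℝ) * m ≤ 3 := by exact_mod_cast (by omega : k * m ≤ 3)
      have : (m : ℝ) ≤ 3 := by nlinarith
      nlinarith

/-- At least one of the two candidates for `c` is non-resonant. If both were resonant, `8π` would be
a root of two quadratics with rational coefficients whose constant terms are the squares of
`n / 5^(2e)` and `m / 13^(2e)` up to sign. Irrationality of `π` makes these constant terms agree,
so both fractions equal the same integer, which `no_quad` excludes. -/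
theorem nonResonant_or (s e : ℕ) (hs : s ≤ 2) :
    NonResonant ((2 : ℝ) ^ s / 2 * 5 ^ e) ∨ NonResonant ((2 : ℝ) ^ s / 2 * 13 ^ e) := by
  by_contra hcon
  push Not at hcon
  obtain ⟨h1, h2⟩ := hcon
  -- Replacing `n` by `4 ^ (2 - s) * n` removes the power of two from the resonance equation.
  have red : ∀ P : ℕ, 0 < P → ¬ NonResonant ((2 : ℝ) ^ s / 2 * (P : ℝ) ^ e) →
      ∃ n k : ℕ, 0 < n ∧ (8 * Real.pi * ((P : ℝ) ^ e) ^ 2) ^ 2 =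
        8 * k * n * (8 * Real.pi * ((P : ℝ) ^ e) ^ 2) + (n : ℝ) ^ 2 := by
    intro P hP h
    unfold NonResonant at h
    push Not at h
    obtain ⟨n, hn, k, hk⟩ := h
    refine ⟨4 ^ (2 - s) * n, k, by positivity, ?_⟩
    interval_cases s <;> norm_num at hk ⊢ <;> linarith
  obtain ⟨n, k, hn, h⟩ := red 5 (by norm_num) (by exact_mod_cast h1)
  obtain ⟨n', k', hn', h'⟩ := red 13 (by norm_num) (by exact_mod_cast h2)
  push_cast at h h'
  set A : ℕ := 5 ^ e with hA
  set B : ℕ := 13 ^ e with hB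
  have hA' : ((5 : ℝ) ^ e) = (A : ℝ) := by rw [hA]; push_cast; rfl
  have hB' : ((13 : ℝ) ^ e) = (B : ℝ) := by rw [hB]; push_cast; rfl
  rw [hA'] at h
  rw [hB'] at h'
  have hA0 : 0 < A := by positivity
  have hB0 : 0 < B := by positivity
  have hAr : (A : ℝ) ≠ 0 := by exact_mod_cast hA0.ne'
  have hBr : (B : ℝ) ≠ 0 := by exact_mod_cast hB0.ne'
  have hAq : (A : ℚ) ≠ 0 := by exact_mod_cast hA0.ne'
  have hBq : (B : ℚ) ≠ 0 := by exact_mod_cast hB0.ne'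
  have e1 : (8 * Real.pi) ^ 2 = 8 * k * (n / A ^ 2) * (8 * Real.pi) + (n / A ^ 2 : ℝ) ^ 2 := by
    field_simp
    linear_combination h
  have e2 : (8 * Real.pi) ^ 2 = 8 * k' * (n' / B ^ 2) * (8 * Real.pi) + (n' / B ^ 2 : ℝ) ^ 2 := by
    field_simp
    linear_combination h'
  have e3 := (irr_lin (p := 64 * (k * (n / A ^ 2) - k' * (n' / B ^ 2)))
    (q := (n' / B ^ 2) ^ 2 - (n / A ^ 2) ^ 2) (by push_cast; linear_combination e2 - e1)).2
  have e4 : (n / A ^ 2 : ℚ) = n' / B ^ 2 := by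
    rw [← sq_eq_sq₀ (by positivity) (by positivity)]
    linarith
  have e5 : n * B ^ 2 = n' * A ^ 2 := by
    rw [div_eq_div_iff (by positivity) (by positivity)] at e4
    exact_mod_cast e4
  have cop : Nat.Coprime (A ^ 2) (B ^ 2) := by
    rw [hA, hB]
    apply Nat.Coprime.pow
    apply Nat.Coprime.pow
    norm_num
  have dv : A ^ 2 ∣ n := cop.dvd_of_dvd_mul_right ⟨n', by rw [e5]; ring⟩
  obtain ⟨m, rfl⟩ := dv
  have hm : 0 < m := Nat.pos_of_mul_pos_left hn
  apply no_quad hm (k := k)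
  rw [e1]
  push_cast
  field_simp

/-! ### Lattice points on circles -/

/-- The Gaussian integer `i`. -/
def gi : GaussianInt := ⟨0, 1⟩

theorem gauss_prime_of_norm {P : ℕ} (hP : P.Prime) {w : GaussianInt} (hw : w.norm = P) :
    Prime w := by
  apply Irreducible.prime
  have nu : ∀ z : GaussianInt, z.norm.natAbs = 1 ↔ IsUnit z := fun z => Zsqrtd.norm_eq_one_iff
  constructor
  · rw [← nu, hw]
    simpa using hP.one_lt.ne'
  · intro x y hxy
    rw [hxy, Zsqrtd.norm_mul] at hw
    have h1 : x.norm.natAbs * y.norm.natAbs = P := by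
      rw [← Int.natAbs_mul, hw, Int.natAbs_natCast]
    rw [← nu, ← nu]
    rcases (Nat.prime_mul_iff.mp (h1 ▸ hP)) with h | h
    · exact Or.inr h.2
    · exact Or.inl h.2

theorem gi_pow (r : ℕ) : IsUnit (gi ^ r) := by
  apply IsUnit.pow
  rw [← Zsqrtd.norm_eq_one_iff]
  rfl

theorem unit_eq_gi_pow {z : GaussianInt} (hz : z.norm = 1) : ∃ r : Fin 4, z = gi ^ (r : ℕ) := by
  obtain ⟨x, y⟩ := z
  rw [Zsqrtd.norm_def] at hz
  simp only at hz
  have hz' : x ^ 2 + y ^ 2 = 1 := by linarith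
  have hx0 := sq_nonneg x
  have hy0 := sq_nonneg y
  have hx : -1 ≤ x ∧ x ≤ 1 := by constructor <;> nlinarith
  have hy : -1 ≤ y ∧ y ≤ 1 := by constructor <;> nlinarith
  obtain ⟨hx1, hx2⟩ := hx
  obtain ⟨hy1, hy2⟩ := hy
  interval_cases x <;> interval_cases y <;> first | (exfalso; revert hz; decide) | decide

/-- Every Gaussian integer of norm `P ^ N` is `i^r w^j w̄^(N-j)`, where `w` has prime norm `P`:
`w` divides `z z̄`, hence `z` or `z̄`, and one factor can be split off. -/
theorem gauss_norm_pow {P : ℕ} (hP : P.Prime) {w : GaussianInt} (hw : w.norm = P) (N : ℕ) :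
    ∀ z : GaussianInt, z.norm = (P : ℤ) ^ N →
      ∃ r : Fin 4, ∃ j : Fin (N + 1), z = gi ^ (r : ℕ) * w ^ (j : ℕ) * star w ^ (N - j) := by
  have P0 : (P : ℤ) ≠ 0 := by exact_mod_cast hP.ne_zero
  induction N with
  | zero =>
    intro z hz
    obtain ⟨r, hr⟩ := unit_eq_gi_pow (by simpa using hz)
    exact ⟨r, 0, by simp [hr]⟩
  | succ N ih =>
    intro z hz
    have hpr := gauss_prime_of_norm hP hw
    have hdvd : w ∣ z * star z := by
      rw [← Zsqrtd.norm_eq_mul_conj, hz, ← hw, pow_succ]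
      push_cast
      rw [Zsqrtd.norm_eq_mul_conj]
      exact ⟨(w * star w) ^ N * star w, by ring⟩
    rcases hpr.dvd_or_dvd hdvd with ⟨v, rfl⟩ | ⟨v, hv⟩
    · rw [Zsqrtd.norm_mul, hw, pow_succ'] at hz
      obtain ⟨r, j, rfl⟩ := ih v (mul_left_cancel₀ P0 hz)
      refine ⟨r, j.succ, ?_⟩
      simp only [Fin.val_succ, Nat.add_sub_add_right]
      ring
    · have hz' : z = star w * star v := by
        rw [← star_star z, hv, star_mul, mul_comm]
      subst hz'
      rw [Zsqrtd.norm_mul, Zsqrtd.norm_conj, hw, pow_succ'] at hz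
      obtain ⟨r, j, hj⟩ := ih (star v) (mul_left_cancel₀ P0 hz)
      refine ⟨r, j.castSucc, ?_⟩
      rw [hj]
      have hle : (j : ℕ) ≤ N := by omega
      simp only [Fin.val_castSucc]
      rw [Nat.sub_add_comm hle, pow_succ]
      ring

/-- The exponents in `gauss_norm_pow` are unique if the primes `w` and `w̄` are not associated. -/
theorem gauss_inj {P : ℕ} (hP : P.Prime) {w : GaussianInt} (hw : w.norm = P)
    (hc : ¬ w ∣ star w) (N : ℕ) (r r' : Fin 4) (i j : ℕ) (hij : i ≤ j) (hj : j ≤ N)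
    (h : gi ^ (r : ℕ) * w ^ i * star w ^ (N - i) = gi ^ (r' : ℕ) * w ^ j * star w ^ (N - j)) :
    r = r' ∧ i = j := by
  have hpr := gauss_prime_of_norm hP hw
  have hs : star w ≠ 0 := by
    rw [Ne, star_eq_zero]; exact hpr.ne_zero
  obtain ⟨d, rfl⟩ := Nat.exists_eq_add_of_le hij
  have e : N - i = d + (N - (i + d)) := by omega
  rw [e, pow_add, pow_add] at h
  have h2 : gi ^ (r : ℕ) * star w ^ d = gi ^ (r' : ℕ) * w ^ d := by
    apply mul_left_cancel₀ (pow_ne_zero i hpr.ne_zero)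
    apply mul_right_cancel₀ (pow_ne_zero (N - (i + d)) hs)
    linear_combination h
  rcases Nat.eq_zero_or_pos d with rfl | hd
  · refine ⟨?_, rfl⟩
    simp only [pow_zero, mul_one] at h2
    clear h e
    revert h2
    revert r r'
    decide
  · exfalso
    apply hc
    have : w ∣ gi ^ (r : ℕ) * star w ^ d := by
      rw [h2]
      exact Dvd.dvd.mul_left (dvd_pow_self _ hd.ne') _
    rcases hpr.dvd_or_dvd this with h3 | h3
    · exact absurd (isUnit_of_dvd_unit h3 (gi_pow _)) hpr.not_isUnit
    · exact hpr.dvd_of_dvd_pow h3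

/-- The representations of `M` as an ordered sum of two integer squares. -/
def TwoSquares (M : ℤ) : Set (ℤ × ℤ) := {p | p.1 ^ 2 + p.2 ^ 2 = M}

theorem card_rep {P : ℕ} (hP : P.Prime) {w : GaussianInt} (hw : w.norm = P)
    (hc : ¬ w ∣ star w) (N : ℕ) : (TwoSquares ((P : ℤ) ^ N)).ncard = 4 * (N + 1) := by
  let Φ : Fin 4 × Fin (N + 1) → GaussianInt := fun q =>
    gi ^ (q.1 : ℕ) * w ^ (q.2 : ℕ) * star w ^ (N - q.2)
  let Ψ : Fin 4 × Fin (N + 1) → ℤ × ℤ := fun q => ((Φ q).re, (Φ q).im)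
  have hinj : Function.Injective Ψ := by
    intro q q' h
    have h1 : Φ q = Φ q' := by
      simp only [Ψ, Prod.mk.injEq] at h
      exact Zsqrtd.ext h.1 h.2
    rcases le_total (q.2 : ℕ) q'.2 with hle | hle
    · obtain ⟨a, b⟩ := gauss_inj hP hw hc N q.1 q'.1 q.2 q'.2 hle (by omega) h1
      exact Prod.ext a (Fin.ext b)
    · obtain ⟨a, b⟩ := gauss_inj hP hw hc N q'.1 q.1 q'.2 q.2 hle (by omega) h1.symm
      exact Prod.ext a.symm (Fin.ext b.symm)
  have hrange : TwoSquares ((P : ℤ) ^ N) = Set.range Ψ := by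
    ext ⟨x, y⟩
    constructor
    · intro h
      obtain ⟨r, j, hz⟩ := gauss_norm_pow hP hw N ⟨x, y⟩ (by
        rw [Zsqrtd.norm_def, ← (show x ^ 2 + y ^ 2 = _ from h)]
        ring)
      refine ⟨(r, j), ?_⟩
      simp only [Ψ, Φ]
      rw [← hz]
    · rintro ⟨q, hq⟩
      have hn : (Φ q).norm = (P : ℤ) ^ N := by
        have hpow : ∀ (z : GaussianInt) (k : ℕ), (z ^ k).norm = z.norm ^ k := fun z k =>
          map_pow (Zsqrtd.normMonoidHom (d := -1)) z k
        simp only [Φ]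
        rw [Zsqrtd.norm_mul, Zsqrtd.norm_mul, hpow, hpow, hpow, Zsqrtd.norm_conj, hw,
          show gi.norm = 1 from rfl, one_pow, one_mul, ← pow_add]
        congr 1
        omega
      rw [Zsqrtd.norm_def] at hn
      simp only [Ψ, Prod.mk.injEq] at hq
      rw [hq.1, hq.2] at hn
      change x ^ 2 + y ^ 2 = _
      rw [← hn]; ring
  rw [hrange, ← Set.image_univ, Set.ncard_image_of_injective _ hinj, Set.ncard_univ]
  simp

/-- The lattice points `(k, m)` on the circle `k² + m² = ck` through the origin, for
`c = 2^s C / 2`; the equation is cleared of denominators. -/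
def CirclePoints (s : ℕ) (C : ℤ) : Set (ℤ × ℤ) := {p | 2 * (p.1 ^ 2 + p.2 ^ 2) = 2 ^ s * C * p.1}

/-- Modulo `8`, a representation of the square of a `C ≡ 1 mod 4` has one odd coordinate and one
divisible by `4`. -/
theorem rep_parity {C : ℤ} (hC : C % 4 = 1) (u v : ℤ) (h : u ^ 2 + v ^ 2 = C ^ 2) :
    (u % 2 = 1 ∧ v % 4 = 0) ∨ (v % 2 = 1 ∧ u % 4 = 0) := by
  have key : ∀ u v C : ZMod 8, (C = 1 ∨ C = 5) → u ^ 2 + v ^ 2 = C ^ 2 →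
      ((u = 1 ∨ u = 3 ∨ u = 5 ∨ u = 7) ∧ (v = 0 ∨ v = 4)) ∨
      ((v = 1 ∨ v = 3 ∨ v = 5 ∨ v = 7) ∧ (u = 0 ∨ u = 4)) := by decide
  have cast : ∀ x r : ℤ, ((x : ZMod 8) = (r : ZMod 8)) ↔ x % 8 = r % 8 := fun x r =>
    ZMod.intCast_eq_intCast_iff' x r 8
  have hc : ((C : ZMod 8) = 1 ∨ (C : ZMod 8) = 5) := by
    have h1 := cast C 1
    have h5 := cast C 5
    push_cast at h1 h5
    rw [h1, h5]
    omega
  have := key u v C hc (by exact_mod_cast congrArg (Int.cast : ℤ → ZMod 8) h)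
  have c0 := fun x => cast x 0
  have c1 := fun x => cast x 1
  have c3 := fun x => cast x 3
  have c4 := fun x => cast x 4
  have c5 := fun x => cast x 5
  have c7 := fun x => cast x 7
  push_cast at c0 c1 c3 c4 c5 c7
  simp only [c0, c1, c3, c4, c5, c7] at this
  omega

/-- The map `(k, m) ↦ (2^(2-s) k - C, 2^(2-s) m)` identifies the lattice points on the circle with
those representations of `C² = P^(2e)` as a sum of two squares whose first coordinate is
arbitrary (`s = 2`), odd (`s = 1`) or `≡ 3 mod 4` (`s = 0`). Swapping coordinates and changing
signs show that these are all, half, or a quarter of the `4 (2e + 1)` representations. -/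
theorem card_lat {P : ℕ} (hP : P.Prime) (hP4 : P % 4 = 1) {w : GaussianInt} (hw : w.norm = P)
    (hc : ¬ w ∣ star w) (s e : ℕ) (hs : s ≤ 2) :
    (CirclePoints s ((P : ℤ) ^ e)).ncard = 2 ^ s * (2 * e + 1) := by
  set C : ℤ := (P : ℤ) ^ e with hCd
  have hC : C % 4 = 1 := by
    have : ((P : ℤ)) ^ e ≡ 1 ^ e [ZMOD 4] := Int.ModEq.pow e (by
      change (P : ℤ) % 4 = 1 % 4
      omega)
    rw [one_pow] at this
    exact this
  have hR : (TwoSquares (C ^ 2)).ncard = 4 * (2 * e + 1) := by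
    rw [hCd, ← pow_mul, mul_comm e 2]
    exact card_rep hP hw hc (2 * e)
  have hfin : (TwoSquares (C ^ 2)).Finite := Set.finite_of_ncard_pos (by rw [hR]; positivity)
  let R1 : Set (ℤ × ℤ) := {p | p ∈ TwoSquares (C ^ 2) ∧ p.1 % 2 = 1}
  let R3 : Set (ℤ × ℤ) := {p | p ∈ TwoSquares (C ^ 2) ∧ p.1 % 4 = 3}
  have f1 : R1.Finite := hfin.subset fun p hp => hp.1
  have f3 : R3.Finite := hfin.subset fun p hp => hp.1
  have c1 : R1.ncard = 2 * (2 * e + 1) := by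
    have hU : TwoSquares (C ^ 2) = R1 ∪ Prod.swap '' R1 := by
      ext ⟨u, v⟩
      constructor
      · intro h
        rcases rep_parity hC u v h with h1 | h1
        · exact Or.inl ⟨h, h1.1⟩
        · refine Or.inr ⟨(v, u), ⟨?_, h1.1⟩, rfl⟩
          change v ^ 2 + u ^ 2 = C ^ 2
          rw [add_comm]; exact h
      · rintro (h | ⟨⟨v', u'⟩, h, h2⟩)
        · exact h.1
        · simp only [Prod.swap_prod_mk, Prod.mk.injEq] at h2
          obtain ⟨rfl, rfl⟩ := h2
          change u' ^ 2 + v' ^ 2 = C ^ 2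
          rw [add_comm]; exact h.1
    have hD : Disjoint R1 (Prod.swap '' R1) := by
      rw [Set.disjoint_left]
      rintro ⟨u, v⟩ h ⟨⟨v', u'⟩, h', h2⟩
      simp only [Prod.swap_prod_mk, Prod.mk.injEq] at h2
      obtain ⟨rfl, rfl⟩ := h2
      have a1 : u' % 2 = 1 := h.2
      have a2 : v' % 2 = 1 := h'.2
      have := rep_parity hC u' v' h.1
      omega
    have := hR
    rw [hU, Set.ncard_union_eq hD f1 (f1.image _),
      Set.ncard_image_of_injective _ Prod.swap_injective] at this
    omega
  have c3 : R3.ncard = 2 * e + 1 := by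
    have hU : R1 = R3 ∪ Neg.neg '' R3 := by
      ext ⟨u, v⟩
      constructor
      · rintro ⟨h, h1⟩
        simp only at h1
        rcases (by omega : u % 4 = 3 ∨ u % 4 = 1) with h3 | h3
        · exact Or.inl ⟨h, h3⟩
        · refine Or.inr ⟨(-u, -v), ⟨?_, ?_⟩, by simp⟩
          · change (-u) ^ 2 + (-v) ^ 2 = C ^ 2
            rw [neg_sq, neg_sq]; exact h
          · change (-u) % 4 = 3
            omega
      · rintro (h | ⟨⟨u', v'⟩, h, h2⟩)
        · refine ⟨h.1, ?_⟩
          have : u % 4 = 3 := h.2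
          change u % 2 = 1
          omega
        · simp only [Prod.neg_mk, Prod.mk.injEq] at h2
          obtain ⟨rfl, rfl⟩ := h2
          constructor
          · change (-u') ^ 2 + (-v') ^ 2 = C ^ 2
            rw [neg_sq, neg_sq]; exact h.1
          · have : u' % 4 = 3 := h.2
            change (-u') % 2 = 1
            omega
    have hD : Disjoint R3 (Neg.neg '' R3) := by
      rw [Set.disjoint_left]
      rintro ⟨u, v⟩ h ⟨⟨u', v'⟩, h', h2⟩
      simp only [Prod.neg_mk, Prod.mk.injEq] at h2
      obtain ⟨rfl, rfl⟩ := h2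
      have a1 : (-u') % 4 = 3 := h.2
      have a2 : u' % 4 = 3 := h'.2
      omega
    have := c1
    rw [hU, Set.ncard_union_eq hD f3 (f3.image _),
      Set.ncard_image_of_injective _ neg_injective] at this
    omega
  interval_cases s
  · have him : R3 = (fun p : ℤ × ℤ => (4 * p.1 - C, 4 * p.2)) '' CirclePoints 0 C := by
      ext ⟨u, v⟩
      constructor
      · rintro ⟨h, h3⟩
        change u % 4 = 3 at h3
        have hv : v % 4 = 0 := by
          have := rep_parity hC u v h
          omega
        obtain ⟨k, hk⟩ : ∃ k, 4 * k = u + C := ⟨(u + C) / 4, by omega⟩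
        obtain ⟨m, hm⟩ : ∃ m, 4 * m = v := ⟨v / 4, by omega⟩
        obtain rfl : u = 4 * k - C := by omega
        subst hm
        refine ⟨(k, m), ?_, rfl⟩
        have h' : (4 * k - C) ^ 2 + (4 * m) ^ 2 = C ^ 2 := h
        change 2 * (k ^ 2 + m ^ 2) = 2 ^ 0 * C * k
        linarith
      · rintro ⟨⟨k, m⟩, h, h2⟩
        simp only [Prod.mk.injEq] at h2
        obtain ⟨rfl, rfl⟩ := h2
        have h' : 2 * (k ^ 2 + m ^ 2) = 2 ^ 0 * C * k := h
        constructor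
        · change (4 * k - C) ^ 2 + (4 * m) ^ 2 = C ^ 2
          linarith
        · change (4 * k - C) % 4 = 3
          omega
    rw [← c3.trans (by ring : 2 * e + 1 = 2 ^ 0 * (2 * e + 1)), him, Set.ncard_image_of_injective]
    intro p q h
    simp only [Prod.mk.injEq] at h
    exact Prod.ext (by omega) (by omega)
  · have him : R1 = (fun p : ℤ × ℤ => (2 * p.1 - C, 2 * p.2)) '' CirclePoints 1 C := by
      ext ⟨u, v⟩
      constructor
      · rintro ⟨h, h3⟩
        change u % 2 = 1 at h3
        have hv : v % 4 = 0 := by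
          have := rep_parity hC u v h
          omega
        obtain ⟨k, hk⟩ : ∃ k, 2 * k = u + C := ⟨(u + C) / 2, by omega⟩
        obtain ⟨m, hm⟩ : ∃ m, 2 * m = v := ⟨v / 2, by omega⟩
        obtain rfl : u = 2 * k - C := by omega
        subst hm
        refine ⟨(k, m), ?_, rfl⟩
        have h' : (2 * k - C) ^ 2 + (2 * m) ^ 2 = C ^ 2 := h
        change 2 * (k ^ 2 + m ^ 2) = 2 ^ 1 * C * k
        linarith
      · rintro ⟨⟨k, m⟩, h, h2⟩
        simp only [Prod.mk.injEq] at h2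
        obtain ⟨rfl, rfl⟩ := h2
        have h' : 2 * (k ^ 2 + m ^ 2) = 2 ^ 1 * C * k := h
        constructor
        · change (2 * k - C) ^ 2 + (2 * m) ^ 2 = C ^ 2
          linarith
        · change (2 * k - C) % 2 = 1
          omega
    rw [← c1.trans (by ring : 2 * (2 * e + 1) = 2 ^ 1 * (2 * e + 1)), him,
      Set.ncard_image_of_injective]
    intro p q h
    simp only [Prod.mk.injEq] at h
    exact Prod.ext (by omega) (by omega)
  · have him : TwoSquares (C ^ 2) = (fun p : ℤ × ℤ => (p.1 - C, p.2)) '' CirclePoints 2 C := by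
      ext ⟨u, v⟩
      constructor
      · intro h
        refine ⟨(u + C, v), ?_, by simp⟩
        have h' : u ^ 2 + v ^ 2 = C ^ 2 := h
        change 2 * ((u + C) ^ 2 + v ^ 2) = 2 ^ 2 * C * (u + C)
        linarith
      · rintro ⟨⟨k, m⟩, h, h2⟩
        simp only [Prod.mk.injEq] at h2
        obtain ⟨rfl, rfl⟩ := h2
        have h' : 2 * (k ^ 2 + m ^ 2) = 2 ^ 2 * C * k := h
        change (k - C) ^ 2 + m ^ 2 = C ^ 2
        linarith
    rw [← hR.trans (by ring : 4 * (2 * e + 1) = 2 ^ 2 * (2 * e + 1)), him,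
      Set.ncard_image_of_injective]
    intro p q h
    simp only [Prod.mk.injEq] at h
    exact Prod.ext (by omega) (by omega)

theorem not_dvd_star_five : ¬ (⟨2, 1⟩ : GaussianInt) ∣ star ⟨2, 1⟩ := by
  rintro ⟨⟨x, y⟩, h⟩
  have h1 := congrArg Zsqrtd.re h
  have h2 := congrArg Zsqrtd.im h
  simp at h1 h2
  omega

theorem not_dvd_star_thirteen : ¬ (⟨3, 2⟩ : GaussianInt) ∣ star ⟨3, 2⟩ := by
  rintro ⟨⟨x, y⟩, h⟩
  have h1 := congrArg Zsqrtd.re h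
  have h2 := congrArg Zsqrtd.im h
  simp at h1 h2
  omega

/-! ### Smoothness of parametric integrals -/

/-- Differentiation under the integral sign. -/
theorem hasFDerivAt_param {E G : Type} [NormedAddCommGroup E] [NormedSpace ℝ E] [ProperSpace E]
    [NormedAddCommGroup G] [NormedSpace ℝ G] [CompleteSpace G] {U : E × ℝ → G}
    (hU : ContDiff ℝ 1 U) (p : E) :
    HasFDerivAt (fun p => ∫ r in (0 : ℝ)..1, U (p, r))
      (∫ r in (0 : ℝ)..1, (fderiv ℝ U (p, r)).comp (ContinuousLinearMap.inl ℝ E ℝ)) p := by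
  have hc : Continuous (fun q : E × ℝ => (fderiv ℝ U q).comp (ContinuousLinearMap.inl ℝ E ℝ)) :=
    (hU.continuous_fderiv one_ne_zero).clm_comp continuous_const
  have hcomp : IsCompact (Metric.closedBall p 1 ×ˢ Set.Icc (0 : ℝ) 1) :=
    (isCompact_closedBall p 1).prod isCompact_Icc
  obtain ⟨C, hC⟩ := hcomp.exists_bound_of_continuousOn hc.continuousOn
  refine intervalIntegral.hasFDerivAt_integral_of_dominated_of_fderiv_le (bound := fun _ => C)
    (F' := fun p r => (fderiv ℝ U (p, r)).comp (ContinuousLinearMap.inl ℝ E ℝ))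
    (Metric.closedBall_mem_nhds p one_pos) ?_ ?_ ?_ ?_ ?_ ?_
  · exact Filter.Eventually.of_forall fun q =>
      (hU.continuous.comp (by fun_prop : Continuous fun r : ℝ => (q, r))).aestronglyMeasurable
  · exact (hU.continuous.comp (by fun_prop : Continuous fun r : ℝ => (p, r))).intervalIntegrable _ _
  · exact (hc.comp (by fun_prop : Continuous fun r : ℝ => (p, r))).aestronglyMeasurable
  · refine Filter.Eventually.of_forall fun r hr q hq => hC (q, r) ⟨hq, ?_⟩
    rw [Set.uIoc_of_le zero_le_one] at hr
    exact ⟨hr.1.le, hr.2⟩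
  · exact intervalIntegrable_const
  · refine Filter.Eventually.of_forall fun r _ q _ => ?_
    exact ((hU.differentiable one_ne_zero) (q, r)).hasFDerivAt.comp q (hasFDerivAt_prodMk_left q r)

theorem contDiff_param_nat {E : Type} [NormedAddCommGroup E] [NormedSpace ℝ E] [ProperSpace E]
    (n : ℕ) : ∀ {G : Type} [NormedAddCommGroup G] [NormedSpace ℝ G] [CompleteSpace G]
    {U : E × ℝ → G}, ContDiff ℝ n U → ContDiff ℝ n (fun p => ∫ r in (0 : ℝ)..1, U (p, r)) := by
  induction n with
  | zero =>
    intro G _ _ _ U hU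
    refine contDiff_zero.2 ?_
    exact intervalIntegral.continuous_parametric_intervalIntegral_of_continuous'
      (f := fun p r => U (p, r)) hU.continuous 0 1
  | succ n ih =>
    intro G _ _ _ U hU
    have h1 : ContDiff ℝ 1 U := hU.of_le (by norm_cast; omega)
    have hd := fun p => hasFDerivAt_param h1 p
    push_cast
    rw [contDiff_succ_iff_fderiv]
    refine ⟨fun p => (hd p).differentiableAt, by simp, ?_⟩
    rw [show fderiv ℝ (fun p => ∫ r in (0 : ℝ)..1, U (p, r)) = _ from
      funext fun p => (hd p).fderiv]
    refine ih (U := fun q => (fderiv ℝ U q).comp (ContinuousLinearMap.inl ℝ E ℝ)) ?_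
    exact (hU.fderiv_right (by push_cast; rfl)).clm_comp contDiff_const

theorem contDiff_param {E G : Type} [NormedAddCommGroup E] [NormedSpace ℝ E] [ProperSpace E]
    [NormedAddCommGroup G] [NormedSpace ℝ G] [CompleteSpace G]
    {U : E × ℝ → G} (hU : ContDiff ℝ (⊤ : ℕ∞) U) :
    ContDiff ℝ (⊤ : ℕ∞) (fun p => ∫ r in (0 : ℝ)..1, U (p, r)) :=
  contDiff_infty.2 fun n => contDiff_param_nat n (contDiff_infty.1 hU n)

/-! ### Smooth functions on the Kodaira–Thurston manifold and invariant vector fields -/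

noncomputable section

/-- `ℝ⁴` with coordinates `(t, x, y, z)`. -/
abbrev E4 : Type := ℝ × ℝ × ℝ × ℝ

/-- The space of smooth functions on the Kodaira–Thurston manifold, as functions on `ℝ⁴` invariant
under the deck transformations. -/
def ktSub : Submodule ℂ (E4 → ℂ) where
  carrier := {u | ContDiff ℝ (⊤ : ℕ∞) u ∧ ∀ t x y z : ℝ,
    u (t + 1, x, y, z) = u (t, x, y, z) ∧
    u (t, x + 1, y, z + y) = u (t, x, y, z) ∧
    u (t, x, y + 1, z) = u (t, x, y, z) ∧
    u (t, x, y, z + 1) = u (t, x, y, z)}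
  add_mem' := by
    rintro u v ⟨hu, pu⟩ ⟨hv, pv⟩
    refine ⟨hu.add hv, fun t x y z => ?_⟩
    obtain ⟨a1, a2, a3, a4⟩ := pu t x y z
    obtain ⟨b1, b2, b3, b4⟩ := pv t x y z
    simp only [Pi.add_apply, a1, a2, a3, a4, b1, b2, b3, b4, and_self]
  zero_mem' := ⟨contDiff_const, fun t x y z => ⟨rfl, rfl, rfl, rfl⟩⟩
  smul_mem' := by
    rintro c u ⟨hu, pu⟩
    refine ⟨contDiff_const.mul hu, fun t x y z => ?_⟩
    obtain ⟨a1, a2, a3, a4⟩ := pu t x y z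
    simp only [Pi.smul_apply, a1, a2, a3, a4, and_self]

/-- The type of smooth functions on the Kodaira–Thurston manifold. -/
abbrev KT : Type := ktSub

namespace KT

theorem ext {u v : KT} (h : ∀ p, u.1 p = v.1 p) : u = v := Subtype.ext (funext h)
theorem add_val (u v : KT) (p : E4) : (u + v).1 p = u.1 p + v.1 p := rfl
theorem sub_val (u v : KT) (p : E4) : (u - v).1 p = u.1 p - v.1 p := rfl
theorem neg_val (u : KT) (p : E4) : (-u).1 p = -u.1 p := rfl
theorem smul_val (c : ℂ) (u : KT) (p : E4) : (c • u).1 p = c * u.1 p := rfl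
theorem zero_val (p : E4) : (0 : KT).1 p = 0 := rfl

theorem smooth (u : KT) : ContDiff ℝ (⊤ : ℕ∞) u.1 := u.2.1
theorem cont (u : KT) : Continuous u.1 := u.2.1.continuous
theorem diff (u : KT) : Differentiable ℝ u.1 := u.2.1.differentiable (by simp)

/-- The left-invariant vector field `k₁ ∂/∂t + k₂ ∂/∂x + k₃ (∂/∂y + x ∂/∂z) + k₄ ∂/∂z`. -/
def fld (k : E4) (p : E4) : E4 := (k.1, k.2.1, k.2.2.1, k.2.2.1 * p.2.1 + k.2.2.2)

theorem fld_smooth (k : E4) : ContDiff ℝ (⊤ : ℕ∞) (fld k) := by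
  unfold fld
  fun_prop

theorem fderiv_inv {u : E4 → ℂ} (hu : Differentiable ℝ u) {γ : E4 → E4} {L : E4 →L[ℝ] E4}
    {p : E4} (hγ : HasFDerivAt γ L p) (h : ∀ q, u (γ q) = u q) (v : E4) :
    fderiv ℝ u (γ p) (L v) = fderiv ℝ u p v := by
  have h1 : HasFDerivAt (u ∘ γ) ((fderiv ℝ u (γ p)).comp L) p :=
    (hu (γ p)).hasFDerivAt.comp p hγ
  rw [show u ∘ γ = u from funext h] at h1
  rw [h1.fderiv]
  rfl

theorem fderiv_transl {u : E4 → ℂ} (hu : Differentiable ℝ u) (c p : E4)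
    (h : ∀ q, u (q + c) = u q) (v : E4) :
    fderiv ℝ u (p + c) v = fderiv ℝ u p v :=
  fderiv_inv hu (L := ContinuousLinearMap.id ℝ E4) ((hasFDerivAt_id p).add_const c) h v

/-- The linear part of the deck transformation `(t, x, y, z) ↦ (t, x + 1, y, z + y)`. -/
def shear : E4 →ₗ[ℝ] E4 where
  toFun v := (v.1, v.2.1, v.2.2.1, v.2.2.2 + v.2.2.1)
  map_add' v w := by simp; ring
  map_smul' c v := by simp; ring

/-- The derivative along the left-invariant vector field `fld k`, as an operator on smooth functions
on the manifold; invariance of the field makes the derivative invariant again. -/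
def op (k : E4) : KT →ₗ[ℂ] KT where
  toFun u := ⟨fun p => fderiv ℝ u.1 p (fld k p), by
    refine ⟨(u.smooth.fderiv_right (by simp)).clm_apply (fld_smooth k), fun t x y z => ?_⟩
    have hp := u.2.2
    refine ⟨?_, ?_, ?_, ?_⟩
    · have := fderiv_transl u.diff (1, 0, 0, 0) (t, x, y, z)
        (fun ⟨t, x, y, z⟩ => by simpa using (hp t x y z).1) (fld k (t, x, y, z))
      simpa [fld] using this
    · have := fderiv_inv u.diff (γ := fun q => LinearMap.toContinuousLinearMap shear q + (0, 1, 0, 0))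
        (p := (t, x, y, z))
        ((LinearMap.toContinuousLinearMap shear).hasFDerivAt.add_const (0, 1, 0, 0))
        (fun q => by
          simpa [shear] using (hp q.1 q.2.1 q.2.2.1 q.2.2.2).2.1) (fld k (t, x, y, z))
      simp only [LinearMap.coe_toContinuousLinearMap', shear, LinearMap.coe_mk, AddHom.coe_mk,
        fld, Prod.mk_add_mk, add_zero] at this
      simp only [fld]
      rw [← this]
      congr 4
      ring
    · have := fderiv_transl u.diff (0, 0, 1, 0) (t, x, y, z)
        (fun ⟨t, x, y, z⟩ => by simpa using (hp t x y z).2.2.1) (fld k (t, x, y, z))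
      simpa [fld] using this
    · have := fderiv_transl u.diff (0, 0, 0, 1) (t, x, y, z)
        (fun ⟨t, x, y, z⟩ => by simpa using (hp t x y z).2.2.2) (fld k (t, x, y, z))
      simpa [fld] using this⟩
  map_add' u v := by
    apply ext
    intro p
    change fderiv ℝ (u.1 + v.1) p _ = fderiv ℝ u.1 p _ + fderiv ℝ v.1 p _
    rw [fderiv_add (u.diff p) (v.diff p)]
    rfl
  map_smul' c u := by
    apply ext
    intro p
    change fderiv ℝ (c • u.1) p _ = c * fderiv ℝ u.1 p _
    rw [fderiv_const_smul (u.diff p)]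
    rfl

theorem op_val (k : E4) (u : KT) (p : E4) : (op k u).1 p = fderiv ℝ u.1 p (fld k p) := rfl

/-- All brackets of the invariant fields follow from `[∂/∂x, ∂/∂y + x ∂/∂z] = ∂/∂z`. -/
theorem op_comm (k l : E4) (u : KT) :
    op k (op l u) - op l (op k u) =
      ((k.2.1 * l.2.2.1 - k.2.2.1 * l.2.1 : ℝ) : ℂ) • op (0, 0, 0, 1) u := by
  apply ext
  intro p
  have second : ∀ k l : E4, (op k (op l u)).1 p =
      fderiv ℝ (fderiv ℝ u.1) p (fld k p) (fld l p) +
        fderiv ℝ u.1 p (0, 0, 0, l.2.2.1 * k.2.1) := by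
    intro k l
    have h1 : HasFDerivAt (fderiv ℝ u.1) (fderiv ℝ (fderiv ℝ u.1) p) p :=
      ((u.smooth.fderiv_right (m := (⊤ : ℕ∞)) (by simp)).differentiable (by simp) p).hasFDerivAt
    have h2 : HasFDerivAt (fld l) (fderiv ℝ (fld l) p) p :=
      ((fld_smooth l).differentiable (by simp) p).hasFDerivAt
    have h3 : fderiv ℝ (fld l) p (fld k p) = (0, 0, 0, l.2.2.1 * k.2.1) := by
      have h4 : HasFDerivAt (fld l) ((0 : E4 →L[ℝ] ℝ).prod ((0 : E4 →L[ℝ] ℝ).prod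
          ((0 : E4 →L[ℝ] ℝ).prod (l.2.2.1 • ((ContinuousLinearMap.fst ℝ ℝ (ℝ × ℝ)).comp
            (ContinuousLinearMap.snd ℝ ℝ (ℝ × ℝ × ℝ))))))) p := by
        refine (hasFDerivAt_const _ _).prodMk ((hasFDerivAt_const _ _).prodMk
          ((hasFDerivAt_const _ _).prodMk ?_))
        refine HasFDerivAt.add_const _ ?_
        exact (((ContinuousLinearMap.fst ℝ ℝ (ℝ × ℝ)).comp
            (ContinuousLinearMap.snd ℝ ℝ (ℝ × ℝ × ℝ))).hasFDerivAt).const_mul l.2.2.1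
      rw [h4.fderiv]
      simp [fld]
    rw [op_val]
    have h5 : fderiv ℝ (op l u).1 p = _ := (h1.clm_apply h2).fderiv
    rw [h5]
    simp only [add_apply, ContinuousLinearMap.comp_apply,
      ContinuousLinearMap.flip_apply]
    rw [h3, add_comm]
  have sym : fderiv ℝ (fderiv ℝ u.1) p (fld k p) (fld l p) =
      fderiv ℝ (fderiv ℝ u.1) p (fld l p) (fld k p) :=
    ((u.smooth.contDiffAt (x := p)).isSymmSndFDerivAt (by simpa using WithTop.coe_le_coe.2 (le_top (a := (2 : ℕ∞))))) _ _
  rw [sub_val, second, second, sym, smul_val, op_val]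
  have hs : ∀ c : ℝ, fderiv ℝ u.1 p (0, 0, 0, c) = (c : ℂ) * fderiv ℝ u.1 p (0, 0, 0, 1) := by
    intro c
    rw [← Complex.real_smul, ← map_smul]
    simp
  have hf : fld (0, 0, 0, 1) p = (0, 0, 0, 1) := by simp [fld]
  rw [hf, hs (l.2.2.1 * k.2.1), hs (k.2.2.1 * l.2.1)]
  push_cast
  ring

end KT
end

/-! ### The `L²` inner product and integration by parts -/

noncomputable section

section fubini

variable {E : Type} [NormedAddCommGroup E] [MeasureSpace E] [BorelSpace E]
  [SecondCountableTopology E]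
  [IsFiniteMeasureOnCompacts (volume : Measure E)]
  {F : ℝ × E → ℂ} {K : Set E}

theorem integrableOn_prod (hF : Continuous F) (hK : IsCompact K) :
    IntegrableOn F (Set.Icc 0 1 ×ˢ K) ((volume : Measure ℝ).prod (volume : Measure E)) := by
  refine hF.continuousOn.integrableOn_compact' (isCompact_Icc.prod hK) ?_
  exact (isCompact_Icc.prod hK).isClosed.measurableSet

variable [SFinite (volume : Measure E)]

theorem integral_prod_left (hF : Continuous F) (hK : IsCompact K) :
    ∫ p in Set.Icc (0 : ℝ) 1 ×ˢ K, F p = ∫ t in Set.Icc (0 : ℝ) 1, ∫ w in K, F (t, w) :=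
  setIntegral_prod F (integrableOn_prod hF hK)

theorem integral_prod_right (hF : Continuous F) (hK : IsCompact K) :
    ∫ p in Set.Icc (0 : ℝ) 1 ×ˢ K, F p = ∫ w in K, ∫ t in Set.Icc (0 : ℝ) 1, F (t, w) := by
  have h := integrableOn_prod hF hK
  rw [IntegrableOn, ← Measure.prod_restrict] at h
  have := integral_prod_symm F h
  rw [Measure.prod_restrict] at this
  exact this

end fubini

theorem ftc_Icc {φ ψ : ℝ → ℂ} (h : ∀ r, HasDerivAt φ (ψ r) r) (hψ : Continuous ψ) :
    ∫ r in Set.Icc (0 : ℝ) 1, ψ r = φ 1 - φ 0 := by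
  rw [integral_Icc_eq_integral_Ioc, ← intervalIntegral.integral_of_le zero_le_one]
  exact intervalIntegral.integral_eq_sub_of_hasDerivAt (fun r _ => h r)
    (hψ.intervalIntegrable _ _)

theorem shift_Icc {φ : ℝ → ℂ} (h : ∀ r, φ (r + 1) = φ r) (s : ℝ) :
    ∫ r in Set.Icc (0 : ℝ) 1, φ (r + s) = ∫ r in Set.Icc (0 : ℝ) 1, φ r := by
  have hp : Function.Periodic φ 1 := h
  simp only [integral_Icc_eq_integral_Ioc, ← intervalIntegral.integral_of_le zero_le_one]
  rw [intervalIntegral.integral_comp_add_right]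
  have := hp.intervalIntegral_add_eq (0 + s) 0
  rw [zero_add] at this ⊢
  rw [add_comm 1 s, this, zero_add]

namespace KT

/-- The unit cube, a fundamental domain for the deck transformations. -/
def cube : Set E4 := Set.Icc 0 1 ×ˢ Set.Icc 0 1 ×ˢ Set.Icc 0 1 ×ˢ Set.Icc 0 1

theorem compact2 : IsCompact (Set.Icc (0 : ℝ) 1 ×ˢ Set.Icc (0 : ℝ) 1) :=
  isCompact_Icc.prod isCompact_Icc
theorem compact3 : IsCompact (Set.Icc (0 : ℝ) 1 ×ˢ Set.Icc (0 : ℝ) 1 ×ˢ Set.Icc (0 : ℝ) 1) :=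
  isCompact_Icc.prod compact2
theorem isCompact_cube : IsCompact cube := isCompact_Icc.prod compact3

theorem cont_dir (u : KT) (w : E4 → E4) (hw : Continuous w) :
    Continuous fun p => fderiv ℝ u.1 p (w p) :=
  (u.smooth.continuous_fderiv (by simp)).clm_apply hw

theorem hasDerivAt_line (u : KT) {γ : ℝ → E4} {v : E4} {r : ℝ} (h : HasDerivAt γ v r) :
    HasDerivAt (fun s => u.1 (γ s)) (fderiv ℝ u.1 (γ r) v) r :=
  (u.diff (γ r)).hasFDerivAt.comp_hasDerivAt r h

theorem line_t (t x y z : ℝ) : HasDerivAt (fun s => ((s, x, y, z) : E4)) (1, 0, 0, 0) t :=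
  (hasDerivAt_id t).prodMk (hasDerivAt_const t _)
theorem line_x (t x y z : ℝ) : HasDerivAt (fun s => ((t, s, y, z) : E4)) (0, 1, 0, 0) x :=
  (hasDerivAt_const x _).prodMk ((hasDerivAt_id x).prodMk (hasDerivAt_const x _))
theorem line_y (t x y z : ℝ) : HasDerivAt (fun s => ((t, x, s, z) : E4)) (0, 0, 1, 0) y :=
  (hasDerivAt_const y _).prodMk ((hasDerivAt_const y _).prodMk
    ((hasDerivAt_id y).prodMk (hasDerivAt_const y _)))
theorem line_z (t x y z : ℝ) : HasDerivAt (fun s => ((t, x, y, s) : E4)) (0, 0, 0, 1) z :=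
  (hasDerivAt_const z _).prodMk ((hasDerivAt_const z _).prodMk
    ((hasDerivAt_const z _).prodMk (hasDerivAt_id z)))

theorem int_t (u : KT) : ∫ p in cube, fderiv ℝ u.1 p (1, 0, 0, 0) = 0 := by
  have hc := u.cont_dir (fun _ => (1, 0, 0, 0)) continuous_const
  rw [cube, integral_prod_right hc compact3]
  refine setIntegral_eq_zero_of_forall_eq_zero fun ⟨x, y, z⟩ _ => ?_
  rw [ftc_Icc (fun r => u.hasDerivAt_line (line_t r x y z)) (hc.comp (by fun_prop))]
  have := (u.2.2 0 x y z).1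
  rw [zero_add] at this
  rw [this, sub_self]

/-- The faces `x = 0` and `x = 1` of the cube are identified by a shear in `z`, which periodicity in
`z` absorbs after integration over `z`. -/
theorem int_x (u : KT) : ∫ p in cube, fderiv ℝ u.1 p (0, 1, 0, 0) = 0 := by
  have hc := u.cont_dir (fun _ => (0, 1, 0, 0)) continuous_const
  rw [cube, integral_prod_left hc compact3]
  refine setIntegral_eq_zero_of_forall_eq_zero fun t _ => ?_
  rw [integral_prod_right (by fun_prop) compact2]
  have h1 : ∀ w : ℝ × ℝ, ∫ x in Set.Icc (0 : ℝ) 1, fderiv ℝ u.1 (t, x, w) (0, 1, 0, 0) =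
      u.1 (t, 0, w.1, w.2 + -w.1) - u.1 (t, 0, w.1, w.2) := by
    rintro ⟨y, z⟩
    rw [ftc_Icc (fun r => u.hasDerivAt_line (line_x t r y z)) (hc.comp (by fun_prop))]
    have := (u.2.2 t 0 y (z + -y)).2.1
    rw [zero_add, neg_add_cancel_right] at this
    rw [this]
  have hu := u.cont
  simp only [h1]
  rw [integral_prod_left (by fun_prop) isCompact_Icc]
  refine setIntegral_eq_zero_of_forall_eq_zero fun y _ => ?_
  simp only
  rw [integral_sub, shift_Icc (φ := fun z => u.1 (t, 0, y, z)) (fun r => (u.2.2 t 0 y r).2.2.2),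
    sub_self]
  · exact (by fun_prop : Continuous fun a => u.1 (t, 0, y, a + -y)).continuousOn.integrableOn_compact
      isCompact_Icc
  · exact (by fun_prop : Continuous fun a => u.1 (t, 0, y, a)).continuousOn.integrableOn_compact
      isCompact_Icc

theorem int_z (u : KT) (m : ℝ → ℂ) (hm : Continuous m) :
    ∫ p in cube, m p.2.1 * fderiv ℝ u.1 p (0, 0, 0, 1) = 0 := by
  have hc := u.cont_dir (fun _ => (0, 0, 0, 1)) continuous_const
  rw [cube, integral_prod_left (by fun_prop) compact3]
  refine setIntegral_eq_zero_of_forall_eq_zero fun t _ => ?_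
  rw [integral_prod_left (by fun_prop) compact2]
  refine setIntegral_eq_zero_of_forall_eq_zero fun x _ => ?_
  rw [integral_prod_left (by fun_prop) isCompact_Icc]
  refine setIntegral_eq_zero_of_forall_eq_zero fun y _ => ?_
  simp only
  rw [integral_const_mul,
    ftc_Icc (fun r => u.hasDerivAt_line (line_z t x y r)) (hc.comp (by fun_prop))]
  have := (u.2.2 t x y 0).2.2.2
  rw [zero_add] at this
  rw [this, sub_self, mul_zero]

theorem int_y (u : KT) : ∫ p in cube, fderiv ℝ u.1 p (0, 0, 1, 0) = 0 := by
  have hc := u.cont_dir (fun _ => (0, 0, 1, 0)) continuous_const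
  rw [cube, integral_prod_left (by fun_prop) compact3]
  refine setIntegral_eq_zero_of_forall_eq_zero fun t _ => ?_
  rw [integral_prod_left (by fun_prop) compact2]
  refine setIntegral_eq_zero_of_forall_eq_zero fun x _ => ?_
  rw [integral_prod_right (by fun_prop) isCompact_Icc]
  refine setIntegral_eq_zero_of_forall_eq_zero fun z _ => ?_
  rw [ftc_Icc (fun r => u.hasDerivAt_line (line_y t x r z)) (hc.comp (by fun_prop))]
  have := (u.2.2 t x 0 z).2.2.1
  rw [zero_add] at this
  rw [this, sub_self]

theorem int_op (k : E4) (u : KT) : ∫ p in cube, (op k u).1 p = 0 := by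
  have hd : ∀ p : E4, (op k u).1 p = k.1 * fderiv ℝ u.1 p (1, 0, 0, 0) +
      k.2.1 * fderiv ℝ u.1 p (0, 1, 0, 0) + k.2.2.1 * fderiv ℝ u.1 p (0, 0, 1, 0) +
      ((k.2.2.1 * p.2.1 + k.2.2.2 : ℝ) : ℂ) * fderiv ℝ u.1 p (0, 0, 0, 1) := by
    intro p
    simp only [← Complex.real_smul, ← map_smul, ← map_add, op_val]
    simp [fld]
  have c1 := u.cont_dir (fun _ => (1, 0, 0, 0)) continuous_const
  have c2 := u.cont_dir (fun _ => (0, 1, 0, 0)) continuous_const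
  have c3 := u.cont_dir (fun _ => (0, 0, 1, 0)) continuous_const
  have c4 := u.cont_dir (fun _ => (0, 0, 0, 1)) continuous_const
  simp only [hd]
  rw [integral_add, integral_add, integral_add, integral_const_mul,
    integral_const_mul, integral_const_mul, int_t, int_x, int_y,
    int_z u (fun x => ((k.2.2.1 * x + k.2.2.2 : ℝ) : ℂ)) (by fun_prop)]
  · simp
  all_goals
    exact (by fun_prop : Continuous _).continuousOn.integrableOn_compact isCompact_cube

/-- The function `ū v`. -/
def cmul (u v : KT) : KT := ⟨fun p => (starRingEnd ℂ) (u.1 p) * v.1 p, by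
  refine ⟨(Complex.conjCLE.contDiff.comp u.smooth).mul v.smooth, fun t x y z => ?_⟩
  obtain ⟨a1, a2, a3, a4⟩ := u.2.2 t x y z
  obtain ⟨b1, b2, b3, b4⟩ := v.2.2 t x y z
  simp only [a1, a2, a3, a4, b1, b2, b3, b4, and_self]⟩

theorem cmul_val (u v : KT) (p : E4) :
    (cmul u v).1 p = (starRingEnd ℂ) (u.1 p) * v.1 p := rfl

theorem op_cmul (k : E4) (u v : KT) : op k (cmul u v) = cmul (op k u) v + cmul u (op k v) := by
  apply ext
  intro p
  have h1 : HasFDerivAt (fun p => (starRingEnd ℂ) (u.1 p))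
      ((Complex.conjCLE : ℂ →L[ℝ] ℂ).comp (fderiv ℝ u.1 p)) p :=
    (Complex.conjCLE.hasFDerivAt).comp p (u.diff p).hasFDerivAt
  have h2 := h1.mul (v.diff p).hasFDerivAt
  have h3 : fderiv ℝ (cmul u v).1 p = _ := h2.fderiv
  rw [op_val, h3, add_val, cmul_val, cmul_val, op_val, op_val]
  simp
  ring

theorem exists_cube (u : KT) (p : E4) : ∃ q ∈ cube, u.1 p = u.1 q := by
  obtain ⟨t, x, y, z⟩ := p
  have hI : ∀ r : ℝ, Int.fract r ∈ Set.Icc (0 : ℝ) 1 :=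
    fun r => ⟨Int.fract_nonneg r, (Int.fract_lt_one r).le⟩
  have per : ∀ {φ : ℝ → ℂ}, (∀ r, φ (r + 1) = φ r) → ∀ r (n : ℤ), φ (r - n) = φ r := by
    intro φ h r n
    simpa using (show Function.Periodic φ 1 from h).sub_zsmul_eq n (x := r)
  have ht := per (φ := fun s => u.1 (s, x, y, z)) (fun r => (u.2.2 r x y z).1) t ⌊t⌋
  have hx := per (φ := fun s => u.1 (Int.fract t, x + s, y, z + s * y)) (fun r => by
    have := (u.2.2 (Int.fract t) (x + r) y (z + r * y)).2.1
    rw [← this]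
    ring_nf) 0 ⌊x⌋
  have hy := per (φ := fun s => u.1 (Int.fract t, Int.fract x, s, z - ⌊x⌋ * y))
    (fun r => (u.2.2 _ _ r _).2.2.1) y ⌊y⌋
  have hz := per (φ := fun s => u.1 (Int.fract t, Int.fract x, Int.fract y, s))
    (fun r => (u.2.2 _ _ _ r).2.2.2) (z - ⌊x⌋ * y) ⌊z - ⌊x⌋ * y⌋
  simp only [Int.self_sub_floor] at ht hx hy hz
  refine ⟨(Int.fract t, Int.fract x, Int.fract y, Int.fract (z - ⌊x⌋ * y)),
    ⟨hI _, hI _, hI _, hI _⟩, ?_⟩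
  rw [hz, hy, ← ht]
  simp only [zero_sub, add_zero, zero_mul] at hx
  rw [← hx, ← sub_eq_add_neg, Int.self_sub_floor, neg_mul, ← sub_eq_add_neg]

theorem closure_interior_cube : cube ⊆ closure (interior cube) := by
  simp only [cube, interior_prod_eq, closure_prod_eq, interior_Icc,
    closure_Ioo (zero_ne_one : (0:ℝ) ≠ 1)]
  exact subset_rfl

theorem eq_zero_of_integral (u : KT) (h : ∫ p in cube, (starRingEnd ℂ) (u.1 p) * u.1 p = 0) :
    u = 0 := by
  have hu := u.cont
  have h1 : ∫ p in cube, ‖u.1 p‖ ^ 2 = 0 := by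
    have : ∀ p, (starRingEnd ℂ) (u.1 p) * u.1 p = ((‖u.1 p‖ ^ 2 : ℝ) : ℂ) := fun p => by
      rw [mul_comm, Complex.mul_conj, Complex.normSq_eq_norm_sq]
    simp only [this] at h
    rw [integral_complex_ofReal] at h
    exact_mod_cast h
  rw [setIntegral_eq_zero_iff_of_nonneg_ae (.of_forall fun p => by positivity)
    ((by fun_prop : Continuous _).continuousOn.integrableOn_compact isCompact_cube)] at h1
  have h2 : Set.EqOn u.1 0 cube := by
    refine Measure.eqOn_of_ae_eq (μ := volume) ?_ hu.continuousOn continuousOn_const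
      closure_interior_cube
    filter_upwards [h1] with p hp
    simpa using hp
  apply ext
  intro p
  obtain ⟨q, hq, hpq⟩ := u.exists_cube p
  rw [hpq, h2 hq]
  rfl

/-- The `L²` inner product `⟨u, v⟩ = ∫ ū v` over the unit cube. -/
@[reducible]
def core : InnerProductSpace.Core ℂ KT where
  inner u v := ∫ p in cube, (cmul u v).1 p
  conj_inner_symm u v := by
    change (starRingEnd ℂ) (∫ p in cube, (cmul v u).1 p) = ∫ p in cube, (cmul u v).1 p
    rw [← integral_conj]
    refine integral_congr_ae (.of_forall fun p => ?_)
    simp [cmul_val, mul_comm]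
  re_inner_nonneg u := by
    change 0 ≤ (∫ p in cube, (cmul u u).1 p).re
    have : ∀ p, (cmul u u).1 p = ((‖u.1 p‖ ^ 2 : ℝ) : ℂ) := fun p => by
      rw [cmul_val, mul_comm, Complex.mul_conj, Complex.normSq_eq_norm_sq]
    simp only [this]
    rw [integral_complex_ofReal]
    exact integral_nonneg fun p => by positivity
  add_left u v w := by
    change ∫ p in cube, (cmul (u + v) w).1 p =
      (∫ p in cube, (cmul u w).1 p) + ∫ p in cube, (cmul v w).1 p
    rw [← integral_add]
    · refine integral_congr_ae (.of_forall fun p => ?_)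
      simp [cmul_val, add_mul]
    · exact (cont _).continuousOn.integrableOn_compact isCompact_cube
    · exact (cont _).continuousOn.integrableOn_compact isCompact_cube
  smul_left u v r := by
    change ∫ p in cube, (cmul (r • u) v).1 p = (starRingEnd ℂ) r * ∫ p in cube, (cmul u v).1 p
    rw [← integral_const_mul]
    refine integral_congr_ae (.of_forall fun p => ?_)
    simp [cmul_val, mul_assoc]
  definite u h := eq_zero_of_integral u h

instance : NormedAddCommGroup KT := core.toNormedAddCommGroup
instance : InnerProductSpace ℂ KT := InnerProductSpace.ofCore core.toCore

theorem inner_def (u v : KT) : inner ℂ u v = ∫ p in cube, (starRingEnd ℂ) (u.1 p) * v.1 p := rfl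

/-- Integration by parts: invariant vector fields are skew-adjoint. -/
theorem op_skew (k : E4) (u v : KT) : inner ℂ (op k u) v = -inner ℂ u (op k v) := by
  have h := int_op k (cmul u v)
  rw [op_cmul] at h
  simp only [add_val] at h
  rw [integral_add] at h
  · exact eq_neg_of_add_eq_zero_left h
  · exact (cont _).continuousOn.integrableOn_compact isCompact_cube
  · exact (cont _).continuousOn.integrableOn_compact isCompact_cube

end KT
end

/-! ### Fourier modes in `z` -/

noncomputable section

/-- A continuous `1`-periodic function with vanishing Fourier coefficients is zero. -/
theorem fourier_unique {φ : ℝ → ℂ} (hc : Continuous φ) (hp : ∀ r, φ (r + 1) = φ r)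
    (h : ∀ n : ℤ, ∫ r in (0 : ℝ)..1, φ r * Complex.exp (-(2 * Real.pi * n * r * I)) = 0) (r : ℝ) :
    φ r = 0 := by
  have : Fact ((0 : ℝ) < 1) := ⟨one_pos⟩
  have hp' : Function.Periodic φ 1 := hp
  let F : C(AddCircle (1 : ℝ), ℂ) := ⟨hp'.lift, by
    exact continuous_coinduced_dom.2 hc⟩
  have hF : ∀ n : ℤ, fourierCoeff F n = 0 := by
    intro n
    rw [fourierCoeff_eq_intervalIntegral _ n 0]
    rw [zero_add]
    refine Eq.trans (congrArg _ (Eq.trans ?_ (h n))) (smul_zero _)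
    refine intervalIntegral.integral_congr fun r _ => ?_
    simp only [fourier_coe_apply, smul_eq_mul]
    rw [mul_comm]
    congr 2
    push_cast
    ring
  have := has_pointwise_sum_fourier_series_of_summable (f := F)
    (by simp only [funext hF]; exact summable_zero) (r : AddCircle (1 : ℝ))
  simp only [hF, zero_smul] at this
  exact this.unique hasSum_zero

namespace KT

theorem heisenbergOps : HeisenbergOps (op (1, 0, 0, 0)) (op (0, 1, 0, 0)) (op (0, 0, 1, 0))
    (op (0, 0, 0, 1)) where
  skewT := op_skew _
  skewX := op_skew _
  skewY := op_skew _
  skewZ := op_skew _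
  TX u := sub_eq_zero.1 ((op_comm _ _ u).trans (by simp))
  TY u := sub_eq_zero.1 ((op_comm _ _ u).trans (by simp))
  TZ u := sub_eq_zero.1 ((op_comm _ _ u).trans (by simp))
  ZX u := sub_eq_zero.1 ((op_comm _ _ u).trans (by simp))
  ZY u := sub_eq_zero.1 ((op_comm _ _ u).trans (by simp))
  XY u := (op_comm _ _ u).trans (by simp)

/-- The function `r ↦ e^(-2πinr)`. -/
def chr (n : ℤ) (r : ℝ) : ℂ := Complex.exp (-(2 * Real.pi * n * r * I))

theorem chr_smooth (n : ℤ) : ContDiff ℝ (⊤ : ℕ∞) (chr n) := by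
  unfold chr
  have : ContDiff ℝ (⊤ : ℕ∞) (fun r : ℝ => (r : ℂ)) := Complex.ofRealCLM.contDiff
  fun_prop

theorem chr_deriv (n : ℤ) (r : ℝ) :
    HasDerivAt (chr n) (chr n r * (-(2 * Real.pi * n * I))) r := by
  have h : HasDerivAt (fun s : ℝ => -(2 * Real.pi * n * (s : ℂ) * I)) (-(2 * Real.pi * n * I)) r := by
    have h0 : HasDerivAt (fun s : ℝ => (s : ℂ)) 1 r := Complex.ofRealCLM.hasDerivAt
    have := ((h0.const_mul (2 * Real.pi * n : ℂ)).mul_const I).fun_neg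
    rwa [mul_one] at this
  exact h.cexp

theorem chr_zero (n : ℤ) : chr n 0 = 1 := by simp [chr]
theorem chr_one (n : ℤ) : chr n 1 = 1 := by
  rw [chr, Complex.exp_eq_one_iff]
  exact ⟨-n, by push_cast; ring⟩

/-- Translation by `r` in the `z` direction. -/
def tz (p : E4) (r : ℝ) : E4 := (p.1, p.2.1, p.2.2.1, p.2.2.2 + r)

theorem U_smooth (n : ℤ) (u : KT) :
    ContDiff ℝ (⊤ : ℕ∞) (fun q : E4 × ℝ => u.1 (tz q.1 q.2) * chr n q.2) := by
  have h1 := u.smooth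
  have h2 := chr_smooth n
  have h3 : ContDiff ℝ (⊤ : ℕ∞) (fun q : E4 × ℝ => tz q.1 q.2) := by unfold tz; fun_prop
  exact (h1.comp h3).mul (h2.comp contDiff_snd)

theorem U_cont (n : ℤ) (u : KT) (p : E4) : Continuous fun r => u.1 (tz p r) * chr n r :=
  (U_smooth n u).continuous.comp (by fun_prop : Continuous fun r : ℝ => (p, r))

/-- The `n`-th Fourier mode in `z`, the projection to the eigenspace `∂/∂z = 2πin`. -/
def proj (n : ℤ) : KT →ₗ[ℂ] KT where
  toFun u := ⟨fun p => ∫ r in (0 : ℝ)..1, u.1 (tz p r) * chr n r, by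
    refine ⟨contDiff_param (U_smooth n u), fun t x y z => ⟨?_, ?_, ?_, ?_⟩⟩
    · refine intervalIntegral.integral_congr fun r _ => ?_
      simp only [tz, (u.2.2 _ _ _ _).1]
    · refine intervalIntegral.integral_congr fun r _ => ?_
      simp only [tz]
      rw [add_right_comm, (u.2.2 _ _ _ _).2.1]
    · refine intervalIntegral.integral_congr fun r _ => ?_
      simp only [tz, (u.2.2 _ _ _ _).2.2.1]
    · refine intervalIntegral.integral_congr fun r _ => ?_
      simp only [tz]
      rw [add_right_comm, (u.2.2 _ _ _ _).2.2.2]⟩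
  map_add' u v := by
    apply ext
    intro p
    rw [add_val]
    simp only
    rw [← intervalIntegral.integral_add ((U_cont n u p).intervalIntegrable _ _)
      ((U_cont n v p).intervalIntegrable _ _)]
    refine intervalIntegral.integral_congr fun r _ => ?_
    simp only [add_val, add_mul]
  map_smul' c u := by
    apply ext
    intro p
    rw [smul_val]
    simp only
    rw [← intervalIntegral.integral_const_mul]
    refine intervalIntegral.integral_congr fun r _ => ?_
    simp [smul_val, mul_assoc]

theorem proj_val (n : ℤ) (u : KT) (p : E4) :
    (proj n u).1 p = ∫ r in (0 : ℝ)..1, u.1 (tz p r) * chr n r := rfl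

theorem fderiv_tz (p : E4) (r : ℝ) :
    HasFDerivAt (fun q => tz q r) (ContinuousLinearMap.id ℝ E4) p := by
  have : (fun q => tz q r) = fun q : E4 => q + (0, 0, 0, r) := by
    funext q
    simp [tz, Prod.ext_iff]
  rw [this]
  exact (hasFDerivAt_id p).add_const _

theorem op_proj (k : E4) (n : ℤ) (u : KT) : op k (proj n u) = proj n (op k u) := by
  apply ext
  intro p
  have hU := (U_smooth n u).of_le (m := 1) (by simp)
  have h : fderiv ℝ (proj n u).1 p = _ := (hasFDerivAt_param hU p).fderiv
  rw [op_val, h, ContinuousLinearMap.intervalIntegral_apply]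
  · refine intervalIntegral.integral_congr fun r _ => ?_
    have h1 : HasFDerivAt (fun q => u.1 (tz q r) * chr n r)
        ((fderiv ℝ (fun q : E4 × ℝ => u.1 (tz q.1 q.2) * chr n q.2) (p, r)).comp
          (ContinuousLinearMap.inl ℝ E4 ℝ)) p :=
      HasFDerivAt.comp p (f := fun e => (e, r))
        ((hU.differentiable one_ne_zero) (p, r)).hasFDerivAt (hasFDerivAt_prodMk_left p r)
    have h2 : HasFDerivAt (fun q => u.1 (tz q r) * chr n r) _ p :=
      (((u.diff (tz p r)).hasFDerivAt.comp p (fderiv_tz p r)).mul_const (chr n r))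
    rw [h1.unique h2, op_val]
    simp [fld, tz, mul_comm]
  · exact (((hU.continuous_fderiv one_ne_zero).clm_comp continuous_const).comp
      (by fun_prop : Continuous fun r : ℝ => (p, r))).intervalIntegrable _ _

theorem hasDerivAt_tz (p : E4) (r : ℝ) : HasDerivAt (tz p) (0, 0, 0, 1) r := by
  refine (hasDerivAt_const r _).prodMk ((hasDerivAt_const r _).prodMk
    ((hasDerivAt_const r _).prodMk ?_))
  exact (hasDerivAt_id r).const_add _

theorem Z_proj (n : ℤ) (u : KT) :
    op (0, 0, 0, 1) (proj n u) = (I * (2 * Real.pi * n : ℝ)) • proj n u := by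
  rw [op_proj]
  apply ext
  intro p
  rw [smul_val, proj_val, proj_val]
  have h : ∀ r, HasDerivAt (fun r => u.1 (tz p r) * chr n r)
      ((op (0, 0, 0, 1) u).1 (tz p r) * chr n r -
        (I * (2 * Real.pi * n : ℝ)) * (u.1 (tz p r) * chr n r)) r := by
    intro r
    have := (u.hasDerivAt_line (hasDerivAt_tz p r)).mul (chr_deriv n r)
    refine this.congr_deriv ?_
    rw [op_val, show fld (0, 0, 0, 1) (tz p r) = (0, 0, 0, 1) by simp [fld]]
    push_cast
    ring
  have c1 := U_cont n (op (0, 0, 0, 1) u) p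
  have c2 := U_cont n u p
  have c3 : Continuous fun r => (I * (2 * Real.pi * n : ℝ)) * (u.1 (tz p r) * chr n r) :=
    continuous_const.mul c2
  have := intervalIntegral.integral_eq_sub_of_hasDerivAt (a := 0) (b := 1) (fun r _ => h r)
    ((c1.sub c3).intervalIntegrable _ _)
  rw [intervalIntegral.integral_sub (c1.intervalIntegrable _ _)
    (c3.intervalIntegrable _ _), intervalIntegral.integral_const_mul,
    chr_zero, chr_one] at this
  have hp := (u.2.2 p.1 p.2.1 p.2.2.1 p.2.2.2).2.2.2
  have h0 : u.1 (tz p 1) = u.1 (tz p 0) := by simpa [tz] using hp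
  rw [h0, sub_self, sub_eq_zero] at this
  exact this

theorem eq_zero_of_proj {u : KT} (h : ∀ n, proj n u = 0) : u = 0 := by
  apply ext
  intro p
  have := fourier_unique (φ := fun r => u.1 (tz p r))
    (u.cont.comp (by unfold tz; fun_prop))
    (fun r => by simp only [tz, ← add_assoc, (u.2.2 _ _ _ _).2.2.2])
    (fun n => congrArg (fun v : KT => v.1 p) (h n)) 0
  simpa [tz] using this

/-- Off resonance, solutions do not depend on `z`: each nonzero Fourier mode in `z` is again a
solution, hence zero by `mode_eq_zero`. -/
theorem Z_eq_zero {a b : ℝ} (hb : b ≠ 0) {f g : KT}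
    (h : Eqs (op (1, 0, 0, 0)) (op (0, 1, 0, 0)) (op (0, 0, 1, 0)) (op (0, 0, 0, 1)) a b f g)
    (hμ : ∀ n : ℤ, n ≠ 0 → ∀ j : ℕ,
      b ^ 2 / 16 - (2 * Real.pi * n) ^ 2 / b ^ 2 ≠ 2 * |2 * Real.pi * n| * j) :
    op (0, 0, 0, 1) f = 0 ∧ op (0, 0, 0, 1) g = 0 := by
  have key : ∀ n : ℤ, n ≠ 0 → proj n f = 0 ∧ proj n g = 0 := by
    intro n hn
    refine mode_eq_zero heisenbergOps hb (ν := 2 * Real.pi * n) ?_ (Z_proj n f) (Z_proj n g)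
      (a := a) ?_ (hμ n hn)
    · have := Real.pi_ne_zero
      positivity
    · constructor
      · simpa [op_proj] using congrArg (proj n) h.1
      · simpa [op_proj] using congrArg (proj n) h.2
  constructor
  · refine eq_zero_of_proj fun n => ?_
    rw [← op_proj, Z_proj]
    by_cases hn : n = 0
    · simp [hn]
    · rw [(key n hn).1, smul_zero]
  · refine eq_zero_of_proj fun n => ?_
    rw [← op_proj, Z_proj]
    by_cases hn : n = 0
    · simp [hn]
    · rw [(key n hn).2, smul_zero]

end KT
end

/-! ### Fourier analysis in `(x, y)` -/

noncomputable section

namespace KT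

/-- For `p = (k, m)`, the function `e^(2πi(kx + my))`. The signs compensate the one in `chr`. -/
def ech (p : ℤ × ℤ) : KT := ⟨fun q => chr (-p.1) q.2.1 * chr (-p.2) q.2.2.1, by
  have per : ∀ (n : ℤ) (r : ℝ), chr n (r + 1) = chr n r := fun n r => by
    have h := chr_one n
    rw [chr] at h ⊢
    rw [chr, ← mul_one (cexp (-(2 * Real.pi * n * r * I))), ← h, ← Complex.exp_add]
    push_cast
    ring_nf
  refine ⟨?_, fun t x y z => ⟨rfl, ?_, ?_, rfl⟩⟩
  · have h1 := chr_smooth (-p.1)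
    have h2 := chr_smooth (-p.2)
    fun_prop
  · simp only [per]
  · simp only [per]⟩

theorem ech_val (p : ℤ × ℤ) (q : E4) :
    (ech p).1 q = chr (-p.1) q.2.1 * chr (-p.2) q.2.2.1 := rfl

theorem op_ech (k : E4) (p : ℤ × ℤ) :
    op k (ech p) = (2 * Real.pi * I * (k.2.1 * p.1 + k.2.2.1 * p.2)) • ech p := by
  apply ext
  rintro ⟨t, x, y, z⟩
  rw [op_val, smul_val]
  have hf := ((ech p).diff (t, x, y, z)).hasFDerivAt
  have hl : HasDerivAt (fun s : ℝ => ((t, x, y, z) : E4) + s • fld k (t, x, y, z))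
      (fld k (t, x, y, z)) 0 := by
    simpa using ((hasDerivAt_id (0 : ℝ)).smul_const (fld k (t, x, y, z))).const_add (t, x, y, z)
  have h1 : HasDerivAt (fun s : ℝ => (ech p).1 (((t, x, y, z) : E4) + s • fld k (t, x, y, z)))
      (fderiv ℝ (ech p).1 (t, x, y, z) (fld k (t, x, y, z))) 0 := by
    have := (ech p).hasDerivAt_line hl
    simpa using this
  have hx : HasDerivAt (fun s : ℝ => chr (-p.1) (x + s * k.2.1)) _ 0 :=
    HasDerivAt.scomp (g₁ := chr (-p.1)) 0 (chr_deriv (-p.1) (x + 0 * k.2.1))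
      (((hasDerivAt_id (0 : ℝ)).mul_const k.2.1).const_add x)
  have hy : HasDerivAt (fun s : ℝ => chr (-p.2) (y + s * k.2.2.1)) _ 0 :=
    HasDerivAt.scomp (g₁ := chr (-p.2)) 0 (chr_deriv (-p.2) (y + 0 * k.2.2.1))
      (((hasDerivAt_id (0 : ℝ)).mul_const k.2.2.1).const_add y)
  have h2 := hx.mul hy
  rw [h1.unique h2, ech_val]
  simp only [zero_mul, add_zero, Complex.real_smul]
  push_cast
  ring

theorem inner_ech_op (k : E4) (p : ℤ × ℤ) (u : KT) :
    inner ℂ (ech p) (op k u) =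
      2 * Real.pi * I * (k.2.1 * p.1 + k.2.2.1 * p.2) * inner ℂ (ech p) u := by
  have h := op_skew k (ech p) u
  rw [op_ech, inner_smul_left] at h
  simp only [map_mul, map_add, map_ofNat, Complex.conj_ofReal, Complex.conj_I, map_intCast] at h
  linear_combination h

theorem chr_conj (n : ℤ) (r : ℝ) : (starRingEnd ℂ) (chr (-n) r) = chr n r := by
  rw [chr, chr, ← Complex.exp_conj]
  congr 1
  simp [map_ofNat]

theorem chr_norm (n : ℤ) (r : ℝ) : (starRingEnd ℂ) (chr n r) * chr n r = 1 := by
  rw [chr, ← Complex.exp_conj, ← Complex.exp_add, Complex.exp_eq_one_iff]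
  exact ⟨0, by simp [map_ofNat]⟩

theorem inner_ech_self (p : ℤ × ℤ) : inner ℂ (ech p) (ech p) = (1 : ℂ) := by
  rw [inner_def]
  have : ∀ q : E4, (starRingEnd ℂ) ((ech p).1 q) * (ech p).1 q = 1 := by
    intro q
    rw [ech_val, map_mul, mul_mul_mul_comm, chr_norm, chr_norm, one_mul]
  simp only [this]
  rw [cube, integral_prod_left continuous_const compact3]
  simp only [integral_prod_left continuous_const compact2,
    integral_prod_left continuous_const (isCompact_Icc (a := (0 : ℝ)) (b := 1))]
  simp

/-- Distinct characters are orthogonal, being eigenvectors of the skew-adjoint operators `∂/∂x` and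
`∂/∂y + x ∂/∂z` for distinct pairs of eigenvalues. -/
theorem inner_ech_ne {p q : ℤ × ℤ} (h : p ≠ q) : inner ℂ (ech p) (ech q) = (0 : ℂ) := by
  have key : ∀ k : E4, (2 * Real.pi * I) * (k.2.1 * q.1 + k.2.2.1 * q.2) *
      inner ℂ (ech p) (ech q) = (2 * Real.pi * I) * (k.2.1 * p.1 + k.2.2.1 * p.2) *
      inner ℂ (ech p) (ech q) := by
    intro k
    rw [← inner_ech_op, op_ech, inner_smul_right]
  have hI : (2 * Real.pi * I : ℂ) ≠ 0 := Complex.two_pi_I_ne_zero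
  by_contra h0
  apply h
  have k1 := mul_left_cancel₀ hI (mul_right_cancel₀ h0 (key (0, 1, 0, 0)))
  have k2 := mul_left_cancel₀ hI (mul_right_cancel₀ h0 (key (0, 0, 1, 0)))
  simp at k1 k2
  exact Prod.ext k1.symm k2.symm

theorem inner_ech (p q : ℤ × ℤ) : inner ℂ (ech p) (ech q) = if p = q then (1 : ℂ) else 0 := by
  split_ifs with h
  · rw [h, inner_ech_self]
  · exact inner_ech_ne h

theorem const_tz {u : KT} (hT : op (1, 0, 0, 0) u = 0) (hZ : op (0, 0, 0, 1) u = 0)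
    (t x y z : ℝ) : u.1 (t, x, y, z) = u.1 (0, x, y, 0) := by
  have h1 : ∀ r s, (fun t => u.1 (t, x, y, z)) r = (fun t => u.1 (t, x, y, z)) s := by
    have hd := fun r => u.hasDerivAt_line (line_t r x y z)
    refine is_const_of_deriv_eq_zero (fun r => (hd r).differentiableAt) fun r => ?_
    rw [(hd r).deriv]
    have := congrArg (fun v : KT => v.1 (r, x, y, z)) hT
    simpa [op_val, fld] using this
  have h2 : ∀ r s, (fun z => u.1 (0, x, y, z)) r = (fun z => u.1 (0, x, y, z)) s := by
    have hd := fun r => u.hasDerivAt_line (line_z 0 x y r)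
    refine is_const_of_deriv_eq_zero (fun r => (hd r).differentiableAt) fun r => ?_
    rw [(hd r).deriv]
    have := congrArg (fun v : KT => v.1 (0, x, y, r)) hZ
    simpa [op_val, fld] using this
  exact (h1 t 0).trans (h2 z 0)

/-- A function of `(x, y)` alone is determined by its Fourier coefficients. -/
theorem eq_zero_of_coeff {u : KT} (hT : op (1, 0, 0, 0) u = 0) (hZ : op (0, 0, 0, 1) u = 0)
    (h : ∀ p, inner ℂ (ech p) u = (0 : ℂ)) : u = 0 := by
  have hu := u.cont
  have hch : ∀ n, Continuous (chr n) := fun n => (chr_smooth n).continuous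
  have cy : ∀ m : ℤ, Continuous fun x : ℝ => ∫ y in (0 : ℝ)..1, u.1 (0, x, y, 0) * chr m y := by
    intro m
    have := hch m
    refine intervalIntegral.continuous_parametric_intervalIntegral_of_continuous' ?_ 0 1
    unfold Function.uncurry
    fun_prop
  have h1 : ∀ k m : ℤ, ∫ x in (0 : ℝ)..1,
      (∫ y in (0 : ℝ)..1, u.1 (0, x, y, 0) * chr m y) * chr k x = 0 := by
    intro k m
    have := hch m
    have := hch k
    have hkm := h (k, m)
    have hval : ∀ q : E4, (starRingEnd ℂ) ((ech (k, m)).1 q) * u.1 q =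
        (u.1 (0, q.2.1, q.2.2.1, 0) * chr m q.2.2.1) * chr k q.2.1 := by
      rintro ⟨t, x, y, z⟩
      rw [ech_val, map_mul, chr_conj, chr_conj, const_tz hT hZ]
      ring
    rw [inner_def] at hkm
    simp only [hval] at hkm
    rw [cube, integral_prod_left (by fun_prop) compact3] at hkm
    simp only [setIntegral_const] at hkm
    rw [integral_prod_left (by fun_prop) compact2] at hkm
    have h3 : ∀ x : ℝ, ∫ w in Set.Icc (0 : ℝ) 1 ×ˢ Set.Icc (0 : ℝ) 1,
        u.1 (0, x, w.1, 0) * chr m w.1 * chr k x =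
        (∫ y in (0 : ℝ)..1, u.1 (0, x, y, 0) * chr m y) * chr k x := by
      intro x
      rw [integral_prod_left (by fun_prop) isCompact_Icc]
      simp [integral_mul_const, intervalIntegral.integral_of_le, integral_Icc_eq_integral_Ioc]
    simp only [h3] at hkm
    rw [intervalIntegral.integral_of_le zero_le_one, ← integral_Icc_eq_integral_Ioc]
    simpa using hkm
  have hyper : ∀ x y : ℝ, u.1 (0, x + 1, y, 0) = u.1 (0, x, y, 0) := fun x y => by
    rw [← const_tz hT hZ 0 (x + 1) y (0 + y), (u.2.2 0 x y 0).2.1]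
  have h2 : ∀ (m : ℤ) (x : ℝ), ∫ y in (0 : ℝ)..1, u.1 (0, x, y, 0) * chr m y = 0 := fun m x =>
    fourier_unique (cy m) (fun x => by simp only [hyper]) (fun k => h1 k m) x
  apply ext
  rintro ⟨t, x, y, z⟩
  rw [const_tz hT hZ]
  exact fourier_unique (φ := fun y => u.1 (0, x, y, 0)) (by fun_prop)
    (fun y => (u.2.2 0 x y 0).2.2.1) (fun m => h2 m x) y

end KT
end

/-! ### The solution space -/

noncomputable section

namespace KT

/-- The pair `w = (f, g)` of functions on the manifold solves the system defining `𝒮(a,b)`. -/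
def IsSol (a b : ℝ) (w : KT × KT) : Prop :=
  Eqs (op (1, 0, 0, 0)) (op (0, 1, 0, 0)) (op (0, 0, 1, 0)) (op (0, 0, 0, 1)) a b w.1 w.2

/-- The pair of amplitudes spanning the solutions of `kα = -imβ`, `(c - k)β = imα` when
`p = (k, m)` lies on the circle `k² + m² = ck` (where `k = 0` forces `m = 0`). -/
def amp (p : ℤ × ℤ) : ℂ × ℂ := if p.1 = 0 then (1, 0) else (-(I * p.2), p.1)

/-- The basis solution of `𝒮(a,b)` attached to the lattice point `p`. -/
def vec (p : ℤ × ℤ) : KT × KT := ((amp p).1 • ech p, (amp p).2 • ech p)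

theorem amp_eqs {c : ℝ} {p : ℤ × ℤ} (hp : ((p.1 : ℝ) ^ 2 + (p.2 : ℝ) ^ 2) = c * p.1) :
    (p.1 : ℂ) * (amp p).1 = -(I * p.2) * (amp p).2 ∧
      ((c : ℂ) - p.1) * (amp p).2 = I * p.2 * (amp p).1 := by
  unfold amp
  split_ifs with h
  · rw [h] at hp
    have h2 : p.2 = 0 := by simpa using hp
    simp [h, h2]
  · have hc : ((p.1 : ℂ) ^ 2 + (p.2 : ℂ) ^ 2) = c * p.1 := by exact_mod_cast hp
    constructor
    · ring
    · linear_combination -hc + (p.2 : ℂ) ^ 2 * I_sq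

theorem vec_isSol {a c : ℝ} {p : ℤ × ℤ} (hp : ((p.1 : ℝ) ^ 2 + (p.2 : ℝ) ^ 2) = c * p.1) :
    IsSol a (4 * Real.pi * c) (vec p) := by
  obtain ⟨h1, h2⟩ := amp_eqs hp
  constructor
  · simp only [vec, map_smul, op_ech, smul_smul, ← add_smul, ← sub_smul]
    congr 1
    push_cast
    linear_combination (2 * Real.pi) * h2 + 2 * Real.pi * (p.1 : ℂ) * (amp p).2 * I_sq
  · simp only [vec, map_smul, op_ech, smul_smul, ← add_smul, ← sub_smul, ← neg_smul]
    congr 1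
    push_cast
    linear_combination (2 * Real.pi) * h1 - 2 * Real.pi * (p.1 : ℂ) * (amp p).1 * I_sq

theorem isSol_span {a b : ℝ} {ι : Type} [Fintype ι] {v : ι → KT × KT}
    (hv : ∀ i, IsSol a b (v i)) {w : KT × KT} (hw : w ∈ Submodule.span ℂ (Set.range v)) :
    IsSol a b w := by
  induction hw using Submodule.span_induction with
  | mem x hx =>
    obtain ⟨i, rfl⟩ := hx
    exact hv i
  | zero => constructor <;> simp
  | add x y _ _ hx hy =>
    obtain ⟨hx1, hx2⟩ := hx
    obtain ⟨hy1, hy2⟩ := hy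
    constructor <;> simp only [Prod.fst_add, Prod.snd_add, map_add]
    · linear_combination (norm := module) hx1 + hy1
    · linear_combination (norm := module) hx2 + hy2
  | smul r x _ hx =>
    obtain ⟨hx1, hx2⟩ := hx
    constructor <;> simp only [Prod.smul_fst, Prod.smul_snd, map_smul]
    · linear_combination (norm := module) r • hx1
    · linear_combination (norm := module) r • hx2

theorem inner_sum_ech {ι : Type} [Fintype ι] {σ : ι → ℤ × ℤ} (hσ : Function.Injective σ)
    (l : ι → ℂ) (i : ι) : inner ℂ (ech (σ i)) (∑ j, l j • ech (σ j)) = l i := by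
  classical
  rw [inner_sum, Finset.sum_eq_single i]
  · rw [inner_smul_right, inner_ech_self, mul_one]
  · intro j _ hj
    rw [inner_smul_right, inner_ech_ne (fun h => hj (hσ h).symm), mul_zero]
  · simp

theorem inner_sum_ech_not {ι : Type} [Fintype ι] {σ : ι → ℤ × ℤ} {p : ℤ × ℤ}
    (hp : ∀ i, σ i ≠ p)
    (l : ι → ℂ) : inner ℂ (ech p) (∑ j, l j • ech (σ j)) = (0 : ℂ) := by
  rw [inner_sum]
  refine Finset.sum_eq_zero fun j _ => ?_
  rw [inner_smul_right, inner_ech_ne (hp j).symm, mul_zero]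

theorem vec_linearIndependent {ι : Type} [Fintype ι] {σ : ι → ℤ × ℤ}
    (hσ : Function.Injective σ) : LinearIndependent ℂ (fun i => vec (σ i)) := by
  rw [Fintype.linearIndependent_iff]
  intro l hl i
  have h1 : ∑ j, (l j * (amp (σ j)).1) • ech (σ j) = 0 := by
    simpa [vec, Prod.fst_sum, smul_smul] using congrArg Prod.fst hl
  have h2 : ∑ j, (l j * (amp (σ j)).2) • ech (σ j) = 0 := by
    simpa [vec, Prod.snd_sum, smul_smul] using congrArg Prod.snd hl
  have e1 := inner_sum_ech hσ (fun j => l j * (amp (σ j)).1) i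
  have e2 := inner_sum_ech hσ (fun j => l j * (amp (σ j)).2) i
  rw [h1, inner_zero_right] at e1
  rw [h2, inner_zero_right] at e2
  unfold amp at e1 e2
  split_ifs at e1 e2 with h
  · simpa using e1.symm
  · simpa [h] using e2.symm

/-- If `σ` lists all lattice points on the circle `k² + m² = ck` and `c` is non-resonant, every
solution is a combination of the `vec (σ i)`: the solution depends on `(x, y)` only, and the
determinant `ck - k² - m²` of the equations for its Fourier coefficients at `(k, m)` vanishes
exactly on the circle. -/
theorem mem_span_of_isSol {a c : ℝ} (hc : 0 < c) (hres : NonResonant c) {ι : Type} [Fintype ι]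
    {σ : ι → ℤ × ℤ} (hσ : Function.Injective σ)
    (hr : ∀ p : ℤ × ℤ, ((p.1 : ℝ) ^ 2 + (p.2 : ℝ) ^ 2) = c * p.1 → ∃ i, σ i = p)
    {w : KT × KT} (hw : IsSol a (4 * Real.pi * c) w) :
    w ∈ Submodule.span ℂ (Set.range fun i => vec (σ i)) := by
  have hπ := Real.pi_pos
  have hc0 : (c : ℂ) ≠ 0 := by exact_mod_cast hc.ne'
  obtain ⟨f, g⟩ := w
  obtain ⟨Tf, Tg⟩ := T_eq_zero heisenbergOps hw
  obtain ⟨Zf, Zg⟩ := Z_eq_zero (by positivity) hw (by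
    intro n hn j h
    apply hres n.natAbs (Int.natAbs_pos.2 hn) j
    have habs : |2 * Real.pi * (n : ℝ)| = 2 * Real.pi * n.natAbs := by
      rw [abs_mul, abs_of_pos (by positivity), Nat.cast_natAbs, Int.cast_abs]
    have hsq : (n : ℝ) ^ 2 = (n.natAbs : ℝ) ^ 2 := by
      rw [Nat.cast_natAbs, Int.cast_abs, sq_abs]
    rw [habs, mul_pow (2 * Real.pi), hsq] at h
    field_simp at h
    ring_nf at h ⊢
    linarith)
  have rel : ∀ p : ℤ × ℤ,
      (p.1 : ℂ) * inner ℂ (ech p) f = -(I * p.2) * inner ℂ (ech p) g ∧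
      ((c : ℂ) - p.1) * inner ℂ (ech p) g = I * p.2 * inner ℂ (ech p) f := by
    intro p
    obtain ⟨h1, h2⟩ := hw
    simp only [Tf, Tg, Zf, Zg, smul_zero, zero_add, zero_sub, sub_zero, add_zero] at h1 h2
    have e1 := congrArg (fun u => inner ℂ (ech p) u) h1
    have e2 := congrArg (fun u => inner ℂ (ech p) u) h2
    simp only [inner_add_right, inner_neg_right, inner_smul_right, inner_ech_op] at e1 e2
    have h2π : (2 * Real.pi : ℂ) ≠ 0 := by exact_mod_cast (by positivity : 2 * Real.pi ≠ 0)
    constructor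
    · refine mul_left_cancel₀ h2π ?_
      push_cast at e2
      linear_combination e2 + 2 * Real.pi * (p.1 : ℂ) * inner ℂ (ech p) f * I_sq
    · refine mul_left_cancel₀ h2π ?_
      push_cast at e1
      linear_combination e1 - 2 * Real.pi * (p.1 : ℂ) * inner ℂ (ech p) g * I_sq
  -- The coefficient of `vec (σ i)`, read off from a nonzero component of `amp (σ i)`.
  let l : ι → ℂ := fun i => if (σ i).1 = 0 then inner ℂ (ech (σ i)) f
    else inner ℂ (ech (σ i)) g / (σ i).1
  have hl : ∀ i, l i * (amp (σ i)).1 = inner ℂ (ech (σ i)) f ∧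
      l i * (amp (σ i)).2 = inner ℂ (ech (σ i)) g := by
    intro i
    obtain ⟨r1, r2⟩ := rel (σ i)
    simp only [l, amp]
    split_ifs with h
    · refine ⟨by simp, ?_⟩
      rw [h] at r1 r2
      by_cases hm : (σ i).2 = 0
      · rw [hm] at r2
        simpa [hc0, eq_comm] using r2
      · simpa [hm, eq_comm] using r1
    · have h' : ((σ i).1 : ℂ) ≠ 0 := by exact_mod_cast h
      refine ⟨?_, by field_simp⟩
      field_simp
      linear_combination -r1
  have hvan : ∀ p : ℤ × ℤ, (∀ i, σ i ≠ p) →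
      inner ℂ (ech p) f = (0 : ℂ) ∧ inner ℂ (ech p) g = (0 : ℂ) := by
    intro p hp
    obtain ⟨r1, r2⟩ := rel p
    have hne : ((c : ℂ) * p.1 - p.1 ^ 2 - p.2 ^ 2) ≠ 0 := by
      intro h0
      have : (c * p.1 - (p.1 : ℝ) ^ 2 - (p.2 : ℝ) ^ 2) = 0 := by exact_mod_cast h0
      obtain ⟨i, hi⟩ := hr p (by linarith)
      exact hp i hi
    constructor
    · refine (mul_eq_zero.1 ?_).resolve_left hne
      linear_combination ((c : ℂ) - p.1) * r1 - I * p.2 * r2 -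
        (p.2 : ℂ) ^ 2 * inner ℂ (ech p) f * I_sq
    · refine (mul_eq_zero.1 ?_).resolve_left hne
      linear_combination (p.1 : ℂ) * r2 + I * p.2 * r1 -
        (p.2 : ℂ) ^ 2 * inner ℂ (ech p) g * I_sq
  have ker : ∀ (k : E4), k.2.1 = 0 → k.2.2.1 = 0 → ∀ m : ι → ℂ,
      op k (∑ j, m j • ech (σ j)) = 0 := by
    intro k k1 k2 m
    simp [map_sum, op_ech, k1, k2]
  have expand : ∀ (u : KT) (m : ι → ℂ), op (1, 0, 0, 0) u = 0 → op (0, 0, 0, 1) u = 0 →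
      (∀ i, m i = inner ℂ (ech (σ i)) u) →
      (∀ p : ℤ × ℤ, (∀ i, σ i ≠ p) → inner ℂ (ech p) u = (0 : ℂ)) →
      ∑ j, m j • ech (σ j) = u := by
    intro u m hT hZ h1 h2
    rw [← sub_eq_zero]
    refine eq_zero_of_coeff ?_ ?_ fun p => ?_
    · rw [map_sub, hT, ker _ rfl rfl, sub_zero]
    · rw [map_sub, hZ, ker _ rfl rfl, sub_zero]
    · rw [inner_sub_right]
      by_cases hp : ∃ i, σ i = p
      · obtain ⟨i, rfl⟩ := hp
        rw [inner_sum_ech hσ, h1, sub_self]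
      · push Not at hp
        rw [inner_sum_ech_not hp, h2 p hp, sub_zero]
  have ef := expand f _ Tf Zf (fun i => (hl i).1) (fun p hp => (hvan p hp).1)
  have eg := expand g _ Tg Zg (fun i => (hl i).2) (fun p hp => (hvan p hp).2)
  have : (f, g) = ∑ i, l i • vec (σ i) := by
    refine Prod.ext ?_ ?_
    · simp only [Prod.fst_sum, Prod.smul_fst, vec, smul_smul, ef]
    · simp only [Prod.snd_sum, Prod.smul_snd, vec, smul_smul, eg]
  rw [this]
  exact Submodule.sum_mem _ fun i _ => Submodule.smul_mem _ _ (Submodule.subset_span ⟨i, rfl⟩)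

/-- A function on the manifold as a function of four real variables. -/
def curry4 : KT →ₗ[ℂ] F4 where
  toFun u t x y z := u.1 (t, x, y, z)
  map_add' _ _ := rfl
  map_smul' _ _ := rfl

theorem curry4_inj : Function.Injective curry4 := by
  intro u v h
  apply ext
  rintro ⟨t, x, y, z⟩
  exact congrFun (congrFun (congrFun (congrFun h t) x) y) z

theorem pT_curry (u : KT) (t x y z : ℝ) :
    pT (curry4 u) t x y z = (op (1, 0, 0, 0) u).1 (t, x, y, z) := by
  have : pT (curry4 u) t x y z = fderiv ℝ u.1 (t, x, y, z) (1, 0, 0, 0) :=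
    (u.hasDerivAt_line (line_t t x y z)).deriv
  simpa [op_val, fld] using this

theorem pX_curry (u : KT) (t x y z : ℝ) :
    pX (curry4 u) t x y z = (op (0, 1, 0, 0) u).1 (t, x, y, z) := by
  have : pX (curry4 u) t x y z = fderiv ℝ u.1 (t, x, y, z) (0, 1, 0, 0) :=
    (u.hasDerivAt_line (line_x t x y z)).deriv
  simpa [op_val, fld] using this

theorem pZ_curry (u : KT) (t x y z : ℝ) :
    pZ (curry4 u) t x y z = (op (0, 0, 0, 1) u).1 (t, x, y, z) := by
  have : pZ (curry4 u) t x y z = fderiv ℝ u.1 (t, x, y, z) (0, 0, 0, 1) :=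
    (u.hasDerivAt_line (line_z t x y z)).deriv
  simpa [op_val, fld] using this

theorem pY_curry (u : KT) (t x y z : ℝ) :
    pY (curry4 u) t x y z = (op (0, 0, 1, 0) u).1 (t, x, y, z) -
      x * (op (0, 0, 0, 1) u).1 (t, x, y, z) := by
  have h : pY (curry4 u) t x y z = fderiv ℝ u.1 (t, x, y, z) (0, 0, 1, 0) :=
    (u.hasDerivAt_line (line_y t x y z)).deriv
  rw [h, eq_sub_iff_add_eq, op_val, op_val, ← Complex.real_smul, ← map_smul, ← map_add]
  simp [fld]

theorem Sol_eq (a b : ℝ) : Sol a b = curry4.prodMap curry4 '' {w | IsSol a b w} := by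
  have key : ∀ u v : KT,
      ((∀ t x y z : ℝ, -V₂c a b (curry4 u) t x y z + V₁c (curry4 v) t x y z +
        ((b : ℂ) / 4) * curry4 v t x y z = 0) ∧
      (∀ t x y z : ℝ, V₁ (curry4 u) t x y z + V₂ a b (curry4 v) t x y z = 0)) ↔
      IsSol a b (u, v) := by
    intro u v
    simp only [V₂c, V₁c, V₁, V₂, pY_curry, pT_curry, pX_curry, pZ_curry]
    refine and_congr ⟨fun h => ext fun ⟨t, x, y, z⟩ => ?_, fun h t x y z => ?_⟩
      ⟨fun h => ext fun ⟨t, x, y, z⟩ => ?_, fun h t x y z => ?_⟩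
    · have := h t x y z
      simp only [add_val, sub_val, smul_val]
      simp only [curry4, LinearMap.coe_mk, AddHom.coe_mk] at this
      linear_combination 2 * this
    · have := congrArg (fun w : KT => w.1 (t, x, y, z)) h
      simp only [add_val, sub_val, smul_val] at this
      simp only [curry4, LinearMap.coe_mk, AddHom.coe_mk]
      linear_combination this / 2
    · have := h t x y z
      simp only [add_val, sub_val, smul_val, neg_val]
      linear_combination 2 * this
    · have := congrArg (fun w : KT => w.1 (t, x, y, z)) h
      simp only [add_val, sub_val, smul_val, neg_val] at this
      linear_combination this / 2
  ext ⟨f, g⟩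
  constructor
  · rintro ⟨sf, sg, pf, pg, h⟩
    let u : KT := ⟨fun p => f p.1 p.2.1 p.2.2.1 p.2.2.2, sf, fun t x y z => pf t x y z⟩
    let v : KT := ⟨fun p => g p.1 p.2.1 p.2.2.1 p.2.2.2, sg, fun t x y z => pg t x y z⟩
    exact ⟨(u, v), (key u v).1 h, rfl⟩
  · rintro ⟨⟨u, v⟩, h, e⟩
    obtain ⟨rfl, rfl⟩ : curry4 u = f ∧ curry4 v = g := Prod.mk_inj.1 e
    exact ⟨u.smooth, v.smooth, u.2.2, v.2.2, (key u v).2 h⟩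

/-- The solutions `vec p`, for `p` on the circle of parameter `c = 2^s P^e / 2`, form a basis of
`𝒮(a, 4πc)`. The Gaussian prime `w` of norm `P` enters only through the count `card_lat`. -/
theorem hasDimOver_Sol (a : ℝ) {s e P : ℕ} (hP : P.Prime) (hP4 : P % 4 = 1) {w : GaussianInt}
    (hw : w.norm = P) (hstar : ¬ w ∣ star w) (hs : s ≤ 2)
    (hres : NonResonant ((2 : ℝ) ^ s / 2 * P ^ e)) :
    HasDimOver (Sol a (4 * Real.pi * ((2 : ℝ) ^ s / 2 * P ^ e))) (2 ^ s * (2 * e + 1)) := by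
  have hcard := card_lat hP hP4 hw hstar s e hs
  set S := CirclePoints s ((P : ℤ) ^ e) with hS
  have hfin : S.Finite := Set.finite_of_ncard_pos (by rw [hcard]; positivity)
  have := hfin.to_subtype
  let φ : S ≃ Fin (2 ^ s * (2 * e + 1)) :=
    Finite.equivFinOfCardEq ((Nat.card_coe_set_eq S).trans hcard)
  let σ : Fin (2 ^ s * (2 * e + 1)) → ℤ × ℤ := fun i => (φ.symm i).1
  have hσ : Function.Injective σ := Subtype.val_injective.comp φ.symm.injective
  have hmem : ∀ p : ℤ × ℤ, p ∈ S ↔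
      ((p.1 : ℝ) ^ 2 + (p.2 : ℝ) ^ 2) = (2 : ℝ) ^ s / 2 * P ^ e * p.1 := by
    intro p
    rw [hS, CirclePoints, Set.mem_ofPred_eq, ← Int.cast_inj (α := ℝ)]
    push_cast
    constructor <;> intro h <;> linarith
  have hc : (0 : ℝ) < (2 : ℝ) ^ s / 2 * P ^ e := by
    have := hP.pos
    positivity
  have hinj : Function.Injective (curry4.prodMap curry4) := curry4_inj.prodMap curry4_inj
  refine ⟨fun i => curry4.prodMap curry4 (vec (σ i)),
    (vec_linearIndependent hσ).map' _ (LinearMap.ker_eq_bot.2 hinj), ?_⟩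
  rw [Sol_eq, Set.range_comp' (curry4.prodMap curry4) (fun i => vec (σ i)), ← Submodule.map_span, Submodule.map_coe]
  congr 1
  ext w
  constructor
  · exact fun h => isSol_span (fun i => vec_isSol ((hmem _).1 (φ.symm i).2)) h
  · exact fun h => mem_span_of_isSol hc hres hσ
      (fun p hp => ⟨φ ⟨p, (hmem p).2 hp⟩, by simp [σ]⟩) h

end KT
end

/-- Holt–Zhang: for every `a ∈ ℝ` and every positive integer `n` not
divisible by `8`, there is a `b ∈ ℝ \ {0}` such that `𝒮(a,b)` has dimension exactly `n`. -/
theorem exists_b_hodge_number_h01_eq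
    (a : ℝ) (n : ℕ) (hn : 0 < n) (h8 : ¬ (8 ∣ n)) :
    ∃ b : ℝ, b ≠ 0 ∧ HasDimOver (Sol a b) n := by
  obtain ⟨s, m, hm, rfl⟩ := Nat.exists_eq_two_pow_mul_odd hn.ne'
  obtain ⟨e, rfl⟩ := hm
  have hs : s ≤ 2 := by
    by_contra h
    exact h8 (Dvd.dvd.mul_right (pow_dvd_pow 2 (by omega : 3 ≤ s)) _)
  have hπ := Real.pi_pos
  rcases nonResonant_or s e hs with h | h
  · refine ⟨_, ?_, KT.hasDimOver_Sol a (P := 5) (by norm_num) (by norm_num) (w := ⟨2, 1⟩)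
      (by decide) not_dvd_star_five hs (by exact_mod_cast h)⟩
    positivity
  · refine ⟨_, ?_, KT.hasDimOver_Sol a (P := 13) (by norm_num) (by norm_num) (w := ⟨3, 2⟩)
      (by decide) not_dvd_star_thirteen hs (by exact_mod_cast h)⟩
    positivity
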